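/- arXiv:2010.14801 — 3 statements merged into one kernel-verified Lean document; each statement's English description precedes it below -/
import Mathlib

section
/- For every d ∈ ℕ there exist constants c(d) > 0 and ε₀(d) > 0 with the following property. For every ε ∈ (0, ε₀(d)) and all n_1, …, n_d ∈ ℕ, setting N = n_1 ⋯ n_d, there is a set of signum tensors S* ⊆ {−1,1}^{n_1×⋯×n_d} of cardinality |S*| ≥ 2^N − 2^{N c(d) ε log₂(1/ε)} such that: whenever a tensor T ∈ ℝ^{n_1×⋯×n_d} has all entries nonzero and (sign T_I)_I ∈ S*, then for every tensor T̃ of rank at most ε N / max_j{n_j} one has ∑_I |T_I − T̃_I| ≥ ε N · min_I |T_I|. -/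
/-- A tensor `T ∈ ℝ^{n₁×⋯×n_d}` has rank at most `m` if it is a sum of `m` tensors of
the form `u¹_{i₁} ⋯ u^d_{i_d}`. -/
def tensorRankLE {d : ℕ} {n : Fin d → ℕ} (T : ((i : Fin d) → Fin (n i)) → ℝ) (m : ℕ) :
    Prop :=
  ∃ u : Fin m → (i : Fin d) → Fin (n i) → ℝ, ∀ I, T I = ∑ s, ∏ i, u s i (I i)

/-- A signum tensor: all entries are `±1`. -/
def IsSignTensor {d : ℕ} {n : Fin d → ℕ} (S : ((i : Fin d) → Fin (n i)) → ℝ) : Prop :=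
  ∀ I, S I = 1 ∨ S I = -1

/-!
Call `{I | 0 < T I}` the pattern of `T`. If `∑ I, |T I - T' I| < ε * N * min |T|`, then the patterns
of `T` and `T'` differ in at most `ε * N` entries, because each entry where they differ contributes
at least `min |T|` to the sum. So it suffices to count the patterns of tensors of rank at most
`m = ⌊ε * N / max n⌋`. The entries of such tensors are polynomials of degree at most `d` in
`k = m * ∑ n ≤ d * ε * N` variables, and by the Sauer–Shelah lemma the count follows from a bound
`O_d(k)` on the VC-dimension of the patterns.

If `h` polynomials are shattered, then the products of subfamilies of them, evaluated at suitable
`2 ^ h` points, have the signs of the Walsh–Hadamard matrix of order `2 ^ h`, while they lie in a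
space of polynomials of dimension `r = (d * h + k).choose k`. A weak form of Forster's theorem,
`|X| * |Y| ≤ r ^ 3 * ‖H‖ ^ 2` for a matrix `H` with entries `±1` and sign rank at most `r`, gives
`2 ^ h ≤ r ^ 3`, which forces `h = O_d(k)`.

For Forster's theorem one seeks weights on `X` under which no point carries a large share of the
`ℓ²` mass of any function in the given `r`-dimensional space: the bound then follows by comparing
`∑ H x y * f y x` with the operator norm. Such weights are obtained by maximising the total
weight; they exist unless some nonzero function in the space has small support, and in that case
one restricts to its zero set.
-/

open Finset

section Coherence

variable {X : Type*} [Fintype X]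

lemma exists_orthonormal_expansion (V : Submodule ℝ (X → ℝ)) :
    ∃ e : Fin (Module.finrank ℝ V) → X → ℝ, (∀ j, ∑ x, e j x ^ 2 = 1) ∧
      ∀ f ∈ V, ∃ a : Fin (Module.finrank ℝ V) → ℝ,
        (∀ x, f x = ∑ j, a j * e j x) ∧ ∑ j, a j ^ 2 = ∑ x, f x ^ 2 := by
  let E := (WithLp.linearEquiv 2 ℝ (X → ℝ)).symm
  let B := (stdOrthonormalBasis ℝ (V.map E.toLinearMap)).reindex
    (finCongr (LinearEquiv.finrank_map_eq E V))
  refine ⟨fun j x ↦ (B j : EuclideanSpace ℝ X) x, fun j ↦ ?_, fun f hf ↦ ?_⟩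
  · have hnorm : ‖(B j : EuclideanSpace ℝ X)‖ ^ 2 = 1 := by
      rw [← Submodule.coe_norm, B.norm_eq_one, one_pow]
    simpa [EuclideanSpace.norm_sq_eq] using hnorm
  · let g : V.map E.toLinearMap := ⟨E f, Submodule.mem_map_of_mem hf⟩
    refine ⟨B.repr g, fun x ↦ ?_, ?_⟩
    · simpa [g, E] using congrArg (fun h : V.map E.toLinearMap ↦ (h : EuclideanSpace ℝ X) x)
        (B.sum_repr g).symm
    · have hnorm : ‖B.repr g‖ ^ 2 = ‖(g : EuclideanSpace ℝ X)‖ ^ 2 := by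
        rw [B.repr.norm_map, Submodule.coe_norm]
      simp only [EuclideanSpace.norm_sq_eq, Real.norm_eq_abs, sq_abs] at hnorm
      exact hnorm

lemma exists_leverage_scores (V : Submodule ℝ (X → ℝ)) :
    ∃ ℓ : X → ℝ, (∀ x, 0 ≤ ℓ x) ∧ ∑ x, ℓ x = Module.finrank ℝ V ∧
      ∀ f ∈ V, ∀ x, f x ^ 2 ≤ ℓ x * ∑ y, f y ^ 2 := by
  obtain ⟨e, he, hexp⟩ := exists_orthonormal_expansion V
  refine ⟨fun x ↦ ∑ j, e j x ^ 2, fun x ↦ by positivity, ?_, fun f hf x ↦ ?_⟩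
  · rw [sum_comm]
    simp [he]
  · obtain ⟨a, hfa, ha⟩ := hexp f hf
    rw [hfa x, ← ha, mul_comm]
    exact sum_mul_sq_le_sq_mul_sq univ a fun j ↦ e j x

lemma exists_weighted_leverage_scores (V : Submodule ℝ (X → ℝ)) {u : X → ℝ} (hu : ∀ x, 0 ≤ u x) :
    ∃ ℓ : X → ℝ, (∀ x, 0 ≤ ℓ x) ∧ ∑ x, ℓ x ≤ Module.finrank ℝ V ∧
      ∀ f ∈ V, ∀ x, u x * f x ^ 2 ≤ ℓ x * ∑ y, u y * f y ^ 2 := by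
  let scale : (X → ℝ) →ₗ[ℝ] X → ℝ := LinearMap.mulLeft ℝ fun x ↦ √(u x)
  obtain ⟨ℓ, hℓ, hsum, hle⟩ := exists_leverage_scores (V.map scale)
  refine ⟨ℓ, hℓ, ?_, fun f hf x ↦ ?_⟩
  · rw [hsum]
    exact_mod_cast Submodule.finrank_map_le scale V
  · simpa [scale, mul_pow, Real.sq_sqrt, hu] using hle _ (Submodule.mem_map_of_mem hf) x

lemma mul_card_lt_finrank_of_forall_exists_lt (V : Submodule ℝ (X → ℝ)) {u : X → ℝ}
    (hu : ∀ x, 0 ≤ u x) {τ : ℝ} {Z : Finset X} (hZ : Z.Nonempty)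
    (hτ : ∀ x ∈ Z, ∃ f ∈ V, τ * ∑ y, u y * f y ^ 2 < u x * f x ^ 2) :
    τ * #Z < Module.finrank ℝ V := by
  obtain ⟨ℓ, hℓ, hsum, hle⟩ := exists_weighted_leverage_scores V hu
  have hlt : ∀ x ∈ Z, τ < ℓ x := fun x hx ↦ by
    obtain ⟨f, hf, hfx⟩ := hτ x hx
    exact lt_of_mul_lt_mul_right (hfx.trans_le (hle f hf x))
      (sum_nonneg fun y _ ↦ mul_nonneg (hu y) (sq_nonneg _))
  calc τ * #Z = ∑ _x ∈ Z, τ := by simp [mul_comm]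
    _ < ∑ x ∈ Z, ℓ x := sum_lt_sum_of_nonempty hZ hlt
    _ ≤ ∑ x, ℓ x := sum_le_univ_sum_of_nonneg hℓ
    _ ≤ _ := hsum

/-- The weights `w : X → [0, 1]` for which no point carries more than a fraction `τ` of the energy
`∑ y, (w y + η) * f y ^ 2` of any `f ∈ V`. The energy is regularised by `η` but the share
`w x * f x ^ 2` of a point is not: a maximal weight below `1` can then be blocked only by a
regularised share which strictly exceeds the fraction `τ`. -/
def cappedWeights (V : Submodule ℝ (X → ℝ)) (τ η : ℝ) : Set (X → ℝ) :=
  {w ∈ Set.Icc 0 1 | ∀ f ∈ V, ∀ x, w x * f x ^ 2 ≤ τ * ∑ y, (w y + η) * f y ^ 2}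

lemma isCompact_cappedWeights (V : Submodule ℝ (X → ℝ)) (τ η : ℝ) :
    IsCompact (cappedWeights V τ η) := by
  have hclosed : IsClosed {w : X → ℝ | ∀ f ∈ V, ∀ x,
      w x * f x ^ 2 ≤ τ * ∑ y, (w y + η) * f y ^ 2} := by
    simp only [Set.ofPred_forall]
    exact isClosed_iInter fun f ↦ isClosed_iInter fun _ ↦ isClosed_iInter fun x ↦
      isClosed_le (by fun_prop) (by fun_prop)
  exact isCompact_Icc.inter_right hclosed

lemma update_mem_cappedWeights [DecidableEq X] {V : Submodule ℝ (X → ℝ)} {τ η : ℝ} (hτ : 0 ≤ τ)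
    {w : X → ℝ} (hw : w ∈ cappedWeights V τ η) {x : X} {t : ℝ} (hwt : w x ≤ t) (ht : t ≤ 1)
    (hle : ∀ f ∈ V, t * f x ^ 2 ≤ τ * ∑ y, (w y + η) * f y ^ 2) :
    Function.update w x t ∈ cappedWeights V τ η := by
  obtain ⟨⟨hw0, hw1⟩, hcap⟩ := hw
  have hincr : w ≤ Function.update w x t := le_update_self_iff.2 hwt
  refine ⟨⟨hw0.trans hincr, update_le_iff.2 ⟨ht, fun y _ ↦ hw1 y⟩⟩, fun f hf y ↦ ?_⟩
  calc Function.update w x t y * f y ^ 2 ≤ τ * ∑ y, (w y + η) * f y ^ 2 := by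
        rcases eq_or_ne y x with rfl | hyx
        · simpa using hle f hf
        · simpa [hyx] using hcap f hf y
    _ ≤ τ * ∑ y, (Function.update w x t y + η) * f y ^ 2 := by
        gcongr with y
        exact hincr y

lemma exists_saturated_mem_cappedWeights (V : Submodule ℝ (X → ℝ)) {τ η : ℝ} (hτ : 0 ≤ τ)
    (hη : 0 < η) :
    ∃ w ∈ cappedWeights V τ η, ∀ x, w x < 1 →
      ∃ f ∈ V, τ * ∑ y, (w y + η) * f y ^ 2 < (w x + η) * f x ^ 2 := by
  classical
  have hzero : (0 : X → ℝ) ∈ cappedWeights V τ η :=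
    ⟨⟨le_rfl, zero_le_one⟩, fun f _ x ↦ by simp only [Pi.zero_apply, zero_mul]; positivity⟩
  obtain ⟨w, hw, hmax⟩ := (isCompact_cappedWeights V τ η).exists_isMaxOn ⟨0, hzero⟩
    (f := fun w ↦ ∑ x, w x) (by fun_prop)
  refine ⟨w, hw, fun x hx ↦ ?_⟩
  by_contra! hle
  let t := min 1 (w x + η)
  have hwt : w x < t := lt_min hx (by linarith)
  have hmem : Function.update w x t ∈ cappedWeights V τ η :=
    update_mem_cappedWeights hτ hw hwt.le (min_le_left _ _) fun f hf ↦
      (mul_le_mul_of_nonneg_right (min_le_right _ _) (sq_nonneg _)).trans (hle f hf)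
  have hsum : ∑ y, Function.update w x t y ≤ ∑ y, w y := hmax hmem
  refine hsum.not_gt (sum_lt_sum (fun y _ ↦ ?_) ⟨x, mem_univ x, by simpa using hwt⟩)
  exact le_update_self_iff.2 hwt.le y

lemma exists_pos_forall_mul_sum_sq_le (V : Submodule ℝ (X → ℝ)) (S : Finset X)
    (hS : ∀ f ∈ V, (∀ x ∈ S, f x = 0) → f = 0) :
    ∃ κ > 0, ∀ f ∈ V, κ * ∑ x, f x ^ 2 ≤ ∑ x ∈ S, f x ^ 2 := by
  classical
  let restrict : V →ₗ[ℝ] S → ℝ := LinearMap.funLeft ℝ ℝ Subtype.val ∘ₗ V.subtype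
  have hker : LinearMap.ker restrict = ⊥ := LinearMap.ker_eq_bot'.2 fun f hf ↦
    Subtype.ext (hS f f.2 fun x hx ↦ congrFun hf ⟨x, hx⟩)
  obtain ⟨extend, hextend⟩ := restrict.exists_leftInverse_of_injective hker
  let m : X → S → ℝ := fun x s ↦ (extend fun t ↦ if s = t then 1 else 0 : X → ℝ) x
  have hexp : ∀ f ∈ V, ∀ x, f x = ∑ s : S, f s * m x s := fun f hf x ↦ by
    have h := congrArg (fun g : V ↦ (g : X → ℝ) x) (LinearMap.congr_fun hextend ⟨f, hf⟩)
    rw [LinearMap.comp_apply, LinearMap.pi_apply_eq_sum_univ extend] at h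
    simpa [restrict, m] using h.symm
  let B := 1 + ∑ x, ∑ s, m x s ^ 2
  have hB : 0 < B := by positivity
  refine ⟨B⁻¹, inv_pos.2 hB, fun f hf ↦ (inv_mul_le_iff₀ hB).2 ?_⟩
  have hS0 : 0 ≤ ∑ s ∈ S, f s ^ 2 := by positivity
  calc ∑ x, f x ^ 2 ≤ ∑ x, (∑ s ∈ S, f s ^ 2) * ∑ s, m x s ^ 2 := by
        refine sum_le_sum fun x _ ↦ ?_
        rw [hexp f hf x, ← sum_coe_sort S fun s ↦ f s ^ 2]
        exact sum_mul_sq_le_sq_mul_sq univ _ _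
    _ = (∑ s ∈ S, f s ^ 2) * ∑ x, ∑ s, m x s ^ 2 := (mul_sum _ _ _).symm
    _ ≤ B * ∑ s ∈ S, f s ^ 2 := by rw [add_mul, one_mul, mul_comm]; linarith

lemma exists_pos_forall_finset_mul_sum_sq_le (V : Submodule ℝ (X → ℝ)) :
    ∃ κ > 0, ∀ S : Finset X, (∀ f ∈ V, (∀ x ∈ S, f x = 0) → f = 0) →
      ∀ f ∈ V, κ * ∑ x, f x ^ 2 ≤ ∑ x ∈ S, f x ^ 2 := by
  have hex : ∀ S : Finset X, ∃ κ > 0, (∀ f ∈ V, (∀ x ∈ S, f x = 0) → f = 0) →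
      ∀ f ∈ V, κ * ∑ x, f x ^ 2 ≤ ∑ x ∈ S, f x ^ 2 := fun S ↦ by
    by_cases hS : ∀ f ∈ V, (∀ x ∈ S, f x = 0) → f = 0
    · obtain ⟨κ, hκ, hle⟩ := exists_pos_forall_mul_sum_sq_le V S hS
      exact ⟨κ, hκ, fun _ ↦ hle⟩
    · exact ⟨1, one_pos, fun h ↦ absurd h hS⟩
  choose κ hκ hle using hex
  obtain ⟨S₀, hS₀⟩ := Finite.exists_min κ
  exact ⟨κ S₀, hκ S₀, fun S hS f hf ↦
    (mul_le_mul_of_nonneg_right (hS₀ S) (by positivity)).trans (hle S hS f hf)⟩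

lemma exists_weights_of_finrank_le_mul_card_support (V : Submodule ℝ (X → ℝ)) {τ c : ℝ}
    (hτ : 0 ≤ τ) (hc : 1 < c)
    (hV : ∀ f ∈ V, f ≠ 0 → (Module.finrank ℝ V : ℝ) ≤ τ * #{x | f x ≠ 0}) :
    ∃ w : X → ℝ, (∀ x, 0 ≤ w x) ∧ (∀ f ∈ V, ∀ x, w x * f x ^ 2 ≤ c * τ * ∑ y, w y * f y ^ 2) ∧
      ∀ f ∈ V, f ≠ 0 → 0 < ∑ y, w y * f y ^ 2 := by
  obtain ⟨κ, hκ, hκle⟩ := exists_pos_forall_finset_mul_sum_sq_le V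
  let η := (c - 1) * κ
  have hη : 0 < η := mul_pos (sub_pos.2 hc) hκ
  obtain ⟨w, ⟨⟨hw0, -⟩, hcap⟩, hsat⟩ := exists_saturated_mem_cappedWeights V hτ hη
  let S : Finset X := {x | 1 ≤ w x}
  have hS : ∀ f ∈ V, (∀ x ∈ S, f x = 0) → f = 0 := by
    intro f hf hfS
    by_contra hne
    obtain ⟨x₀, hx₀⟩ := Function.ne_iff.1 hne
    refine (hV f hf hne).not_gt (mul_card_lt_finrank_of_forall_exists_lt V (u := fun x ↦ w x + η)
      (fun x ↦ add_nonneg (hw0 x) hη.le) ⟨x₀, by simpa using hx₀⟩ fun x hx ↦ hsat x ?_)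
    by_contra! hwx
    exact (mem_filter.1 hx).2 (hfS x (by simpa [S] using hwx))
  have hSle : ∀ f ∈ V, κ * ∑ x, f x ^ 2 ≤ ∑ x, w x * f x ^ 2 := fun f hf ↦
    calc κ * ∑ x, f x ^ 2 ≤ ∑ x ∈ S, f x ^ 2 := hκle S hS f hf
      _ ≤ ∑ x ∈ S, w x * f x ^ 2 := sum_le_sum fun x hx ↦
          le_mul_of_one_le_left (sq_nonneg _) (mem_filter.1 hx).2
      _ ≤ ∑ x, w x * f x ^ 2 :=
          sum_le_univ_sum_of_nonneg fun x ↦ mul_nonneg (hw0 x) (sq_nonneg _)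
  refine ⟨w, hw0, fun f hf x ↦ ?_, fun f hf hne ↦ (mul_pos hκ ?_).trans_le (hSle f hf)⟩
  · calc w x * f x ^ 2 ≤ τ * ∑ y, (w y + η) * f y ^ 2 := hcap f hf x
      _ = τ * (∑ y, w y * f y ^ 2 + (c - 1) * (κ * ∑ y, f y ^ 2)) := by
          simp only [add_mul, sum_add_distrib, ← mul_sum, η, mul_assoc]
      _ ≤ τ * (∑ y, w y * f y ^ 2 + (c - 1) * ∑ y, w y * f y ^ 2) := by
          have := sub_pos.2 hc
          gcongr
          exact hSle f hf
      _ = c * τ * ∑ y, w y * f y ^ 2 := by ring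
  · obtain ⟨x, hx⟩ := Function.ne_iff.1 hne
    exact sum_pos' (fun _ _ ↦ sq_nonneg _) ⟨x, mem_univ x, sq_pos_of_ne_zero hx⟩

end Coherence

section SignRank

open scoped Matrix.Norms.L2Operator

variable {X Y : Type*} [Fintype X] [Fintype Y] [DecidableEq Y]

lemma sum_sq_mulVec_le (H : Matrix X Y ℝ) (a : Y → ℝ) :
    ∑ x, (∑ y, H x y * a y) ^ 2 ≤ ‖H‖ ^ 2 * ∑ y, a y ^ 2 := by
  have h := pow_le_pow_left₀ (norm_nonneg _) (H.l2_opNorm_mulVec (WithLp.toLp 2 a)) 2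
  simp only [mul_pow, EuclideanSpace.norm_sq_eq, Real.norm_eq_abs, sq_abs] at h
  exact h

lemma l2_opNorm_submatrix_le {X' : Type*} [Fintype X'] (H : Matrix X Y ℝ) {e : X' → X}
    (he : e.Injective) : ‖H.submatrix e id‖ ≤ ‖H‖ := by
  refine ContinuousLinearMap.opNorm_le_bound _ (norm_nonneg _) fun a ↦ ?_
  refine abs_le_of_sq_le_sq' ?_ (by positivity) |>.2
  simp only [mul_pow, EuclideanSpace.norm_sq_eq, Real.norm_eq_abs, sq_abs]
  calc ∑ x, (∑ y, H (e x) y * a y) ^ 2 ≤ ∑ x, (∑ y, H x y * a y) ^ 2 :=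
        (sum_map univ ⟨e, he⟩ fun x ↦ (∑ y, H x y * a y) ^ 2).symm.trans_le
          (sum_le_univ_sum_of_nonneg fun _ ↦ sq_nonneg _)
    _ ≤ ‖H‖ ^ 2 * ∑ y, a y ^ 2 := sum_sq_mulVec_le H a

lemma sq_sum_sum_mul_le (V : Submodule ℝ (X → ℝ)) (H : Matrix X Y ℝ) {g : Y → X → ℝ}
    (hg : ∀ y, g y ∈ V) (hnorm : ∀ y, ∑ x, g y x ^ 2 = 1) :
    (∑ y, ∑ x, H x y * g y x) ^ 2 ≤ Module.finrank ℝ V * (‖H‖ ^ 2 * Fintype.card Y) := by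
  obtain ⟨e, he, hexp⟩ := exists_orthonormal_expansion V
  choose a hga ha using fun y ↦ hexp (g y) (hg y)
  have hrearrange : ∑ y, ∑ x, H x y * g y x = ∑ j, ∑ x, e j x * ∑ y, H x y * a y j := by
    simp only [hga, mul_sum]
    rw [sum_comm, sum_comm (s := univ (α := Fin _))]
    refine sum_congr rfl fun x _ ↦ ?_
    rw [sum_comm]
    exact sum_congr rfl fun j _ ↦ sum_congr rfl fun y _ ↦ by ring
  have hinner : ∀ j, (∑ x, e j x * ∑ y, H x y * a y j) ^ 2 ≤ ‖H‖ ^ 2 * ∑ y, a y j ^ 2 := fun j ↦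
    calc (∑ x, e j x * ∑ y, H x y * a y j) ^ 2
        ≤ (∑ x, e j x ^ 2) * ∑ x, (∑ y, H x y * a y j) ^ 2 := sum_mul_sq_le_sq_mul_sq _ _ _
      _ ≤ ‖H‖ ^ 2 * ∑ y, a y j ^ 2 := by rw [he, one_mul]; exact sum_sq_mulVec_le H fun y ↦ a y j
  calc (∑ y, ∑ x, H x y * g y x) ^ 2
      ≤ Module.finrank ℝ V * ∑ j, (∑ x, e j x * ∑ y, H x y * a y j) ^ 2 := by
        rw [hrearrange]
        simpa using sq_sum_le_card_mul_sum_sq (s := univ)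
          (f := fun j ↦ ∑ x, e j x * ∑ y, H x y * a y j)
    _ ≤ Module.finrank ℝ V * ∑ j, ‖H‖ ^ 2 * ∑ y, a y j ^ 2 := by
        gcongr with j
        exact hinner j
    _ = Module.finrank ℝ V * (‖H‖ ^ 2 * Fintype.card Y) := by
        rw [← mul_sum, sum_comm]
        simp [ha, hnorm]

lemma exists_pos_sum_sq_smul_eq_one {f : X → ℝ} (hf : f ≠ 0) :
    ∃ r > (0 : ℝ), ∑ x, (r • f) x ^ 2 = 1 := by
  obtain ⟨x, hx⟩ := Function.ne_iff.1 hf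
  have hpos : 0 < ∑ x, f x ^ 2 :=
    sum_pos' (fun _ _ ↦ sq_nonneg _) ⟨x, mem_univ x, sq_pos_of_ne_zero hx⟩
  refine ⟨(√(∑ x, f x ^ 2))⁻¹, by positivity, ?_⟩
  simp only [Pi.smul_apply, smul_eq_mul, mul_pow, ← mul_sum, inv_pow, Real.sq_sqrt hpos.le]
  exact inv_mul_cancel₀ hpos.ne'

lemma card_le_of_forall_sq_le {V : Submodule ℝ (X → ℝ)} {H : Matrix X Y ℝ} {τ : ℝ} (hτ : 0 ≤ τ)
    (hV : ∀ f ∈ V, ∀ x, f x ^ 2 ≤ τ * ∑ y, f y ^ 2)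
    {f : Y → X → ℝ} (hf : ∀ y, f y ∈ V) (hf0 : ∀ y, f y ≠ 0)
    (hsign : ∀ x y, |f y x| ≤ H x y * f y x) :
    (Fintype.card Y : ℝ) ≤ τ * Module.finrank ℝ V * ‖H‖ ^ 2 := by
  choose r hr hnorm using fun y ↦ exists_pos_sum_sq_smul_eq_one (hf0 y)
  let g : Y → X → ℝ := fun y ↦ r y • f y
  have hg : ∀ y, g y ∈ V := fun y ↦ V.smul_mem (r y) (hf y)
  have hone_le : ∀ y, 1 ≤ √τ * ∑ x, H x y * g y x := fun y ↦
    calc (1 : ℝ) = ∑ x, |g y x| * |g y x| := by simp only [← sq, sq_abs, g, hnorm]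
      _ ≤ ∑ x, √τ * (H x y * g y x) := by
          gcongr with x
          · exact Real.abs_le_sqrt (by simpa only [g, hnorm, mul_one] using hV (g y) (hg y) x)
          · simpa [g, abs_mul, abs_of_pos (hr y), mul_left_comm] using
              mul_le_mul_of_nonneg_left (hsign x y) (hr y).le
      _ = _ := (mul_sum _ _ _).symm
  have hcard : (Fintype.card Y : ℝ) ≤ √τ * ∑ y, ∑ x, H x y * g y x :=
    calc (Fintype.card Y : ℝ) = ∑ _y : Y, 1 := by simp
      _ ≤ ∑ y, √τ * ∑ x, H x y * g y x := sum_le_sum fun y _ ↦ hone_le y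
      _ = _ := (mul_sum _ _ _).symm
  rcases (Fintype.card Y).cast_nonneg (α := ℝ) |>.eq_or_lt with hzero | hpos
  · rw [← hzero]
    positivity
  refine le_of_mul_le_mul_right ?_ hpos
  calc (Fintype.card Y : ℝ) * Fintype.card Y ≤ (√τ * ∑ y, ∑ x, H x y * g y x) ^ 2 := by
        rw [← sq]; gcongr
    _ = τ * (∑ y, ∑ x, H x y * g y x) ^ 2 := by rw [mul_pow, Real.sq_sqrt hτ]
    _ ≤ τ * (Module.finrank ℝ V * (‖H‖ ^ 2 * Fintype.card Y)) := by
        gcongr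
        exact sq_sum_sum_mul_le V H hg hnorm
    _ = _ := by ring

lemma card_le_of_finrank_le_mul_card_support {V : Submodule ℝ (X → ℝ)} {H : Matrix X Y ℝ} {τ : ℝ}
    (hτ : 0 ≤ τ) (hV : ∀ f ∈ V, f ≠ 0 → (Module.finrank ℝ V : ℝ) ≤ τ * #{x | f x ≠ 0})
    {f : Y → X → ℝ} (hf : ∀ y, f y ∈ V) (hf0 : ∀ y, f y ≠ 0)
    (hsign : ∀ x y, |f y x| ≤ H x y * f y x) :
    (Fintype.card Y : ℝ) ≤ τ * Module.finrank ℝ V * ‖H‖ ^ 2 := by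
  refine (le_iff_forall_one_lt_le_mul₀ (by positivity)).2 fun c hc ↦ ?_
  obtain ⟨w, hw, hcoh, hpos⟩ := exists_weights_of_finrank_le_mul_card_support V hτ hc hV
  let scale : (X → ℝ) →ₗ[ℝ] X → ℝ := LinearMap.mulLeft ℝ fun x ↦ √(w x)
  have hsq : ∀ (f : X → ℝ) x, scale f x ^ 2 = w x * f x ^ 2 := fun f x ↦ by
    simp [scale, mul_pow, Real.sq_sqrt (hw x)]
  have hle : (Fintype.card Y : ℝ) ≤ c * τ * Module.finrank ℝ (V.map scale) * ‖H‖ ^ 2 := by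
    refine card_le_of_forall_sq_le (f := fun y ↦ scale (f y)) (by positivity) ?_
      (fun y ↦ Submodule.mem_map_of_mem (hf y)) (fun y hy ↦ ?_) fun x y ↦ ?_
    · rintro _ ⟨f, hf, rfl⟩ x
      simpa only [hsq] using hcoh f hf x
    · have h := hpos (f y) (hf y) (hf0 y)
      simp [← hsq, hy] at h
    · simpa [scale, abs_mul, abs_of_nonneg, mul_left_comm] using
        mul_le_mul_of_nonneg_left (hsign x y) (Real.sqrt_nonneg (w x))
  calc (Fintype.card Y : ℝ) ≤ c * τ * Module.finrank ℝ (V.map scale) * ‖H‖ ^ 2 := hle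
    _ ≤ c * τ * Module.finrank ℝ V * ‖H‖ ^ 2 := by
        gcongr
        exact Submodule.finrank_map_le scale V
    _ = _ := by ring

lemma finrank_map_funLeft_lt {X X' : Type*} [Finite X] {V : Submodule ℝ (X → ℝ)} {e : X' → X}
    {g : X → ℝ} (hg : g ∈ V) (hg0 : g ≠ 0) (hge : g ∘ e = 0) :
    Module.finrank ℝ (V.map (LinearMap.funLeft ℝ ℝ e)) < Module.finrank ℝ V := by
  let restrict := (LinearMap.funLeft ℝ ℝ e).domRestrict V
  have hker : LinearMap.ker restrict ≠ ⊥ := fun h ↦ hg0 <| congrArg Subtype.val <|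
    LinearMap.ker_eq_bot'.1 h ⟨g, hg⟩ hge
  have hker_pos := Submodule.one_le_finrank_iff.2 hker
  have hrank := restrict.finrank_range_add_finrank_ker
  rw [LinearMap.range_domRestrict] at hrank
  lia

lemma card_le_of_mul_finrank_le [Nonempty X] (V : Submodule ℝ (X → ℝ)) {H : Matrix X Y ℝ} {τ : ℝ}
    {r : ℕ} (hτ : 0 ≤ τ) (hr : Module.finrank ℝ V ≤ r)
    (hX : r * Module.finrank ℝ V ≤ τ * Fintype.card X)
    {f : Y → X → ℝ} (hf : ∀ y, f y ∈ V) (hf0 : ∀ x y, f y x ≠ 0)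
    (hsign : ∀ x y, |f y x| ≤ H x y * f y x) :
    (Fintype.card Y : ℝ) ≤ τ * r * ‖H‖ ^ 2 := by
  induction hk : Module.finrank ℝ V using Nat.strong_induction_on generalizing X with
  | _ k ih
  subst hk
  by_cases hV : ∀ g ∈ V, g ≠ 0 → (Module.finrank ℝ V : ℝ) ≤ τ * #{x | g x ≠ 0}
  · have hf0' : ∀ y, f y ≠ 0 := fun y hy ↦
      hf0 (Classical.arbitrary X) y (congrFun hy _)
    calc (Fintype.card Y : ℝ) ≤ τ * Module.finrank ℝ V * ‖H‖ ^ 2 :=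
          card_le_of_finrank_le_mul_card_support hτ hV hf hf0' hsign
      _ ≤ τ * r * ‖H‖ ^ 2 := by gcongr
  -- Restricting to the zero set of a sparse function costs few points but lowers the dimension.
  push Not at hV
  obtain ⟨g, hg, hg0, hgV⟩ := hV
  let V' := V.map (LinearMap.funLeft ℝ ℝ (Subtype.val : {x // g x = 0} → X))
  have hdim : Module.finrank ℝ V' + 1 ≤ Module.finrank ℝ V :=
    finrank_map_funLeft_lt hg hg0 (funext fun x ↦ x.2)
  have hcard : (Fintype.card {x // g x = 0} : ℝ) + #{x | g x ≠ 0} = Fintype.card X := by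
    rw [Fintype.card_subtype]
    exact_mod_cast card_filter_add_card_filter_not (s := univ) (fun x ↦ g x = 0)
  have hX' : r * Module.finrank ℝ V' < τ * Fintype.card {x // g x = 0} := by
    have hdim' : (r : ℝ) * (Module.finrank ℝ V' + 1) ≤ r * Module.finrank ℝ V := by
      gcongr; exact_mod_cast hdim
    have hr' : (Module.finrank ℝ V : ℝ) ≤ r := by exact_mod_cast hr
    rw [← hcard] at hX
    linarith
  have : Nonempty {x // g x = 0} := by
    by_contra hempty
    rw [not_nonempty_iff] at hempty
    simp only [Fintype.card_eq_zero, Nat.cast_zero, mul_zero] at hX'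
    exact hX'.not_ge (by positivity)
  calc (Fintype.card Y : ℝ) ≤ τ * r * ‖H.submatrix (Subtype.val : {x // g x = 0} → X) id‖ ^ 2 :=
        ih _ hdim V' (by lia) hX'.le (fun y ↦ Submodule.mem_map_of_mem (hf y))
          (fun x y ↦ hf0 x y) (fun x y ↦ hsign x y) rfl
    _ ≤ τ * r * ‖H‖ ^ 2 := by
        gcongr
        exact l2_opNorm_submatrix_le H Subtype.val_injective

lemma card_mul_card_le_finrank_pow_three_mul (V : Submodule ℝ (X → ℝ)) {H : Matrix X Y ℝ}
    {f : Y → X → ℝ} (hf : ∀ y, f y ∈ V) (hf0 : ∀ x y, f y x ≠ 0)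
    (hsign : ∀ x y, |f y x| ≤ H x y * f y x) :
    (Fintype.card X * Fintype.card Y : ℝ) ≤ Module.finrank ℝ V ^ 3 * ‖H‖ ^ 2 := by
  cases isEmpty_or_nonempty X
  · simp only [Fintype.card_eq_zero, Nat.cast_zero, zero_mul]
    positivity
  have hX : (0 : ℝ) < Fintype.card X := by exact_mod_cast Fintype.card_pos
  let τ : ℝ := Module.finrank ℝ V ^ 2 / Fintype.card X
  have hle : (Fintype.card Y : ℝ) ≤ τ * Module.finrank ℝ V * ‖H‖ ^ 2 :=
    card_le_of_mul_finrank_le V (by positivity) le_rfl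
      (by rw [div_mul_cancel₀ _ hX.ne', sq]) hf hf0 hsign
  calc (Fintype.card X * Fintype.card Y : ℝ)
      ≤ Fintype.card X * (τ * Module.finrank ℝ V * ‖H‖ ^ 2) := by gcongr
    _ = _ := by simp only [τ]; field_simp

lemma sq_l2_opNorm_of_isHadamard {H : Matrix Y Y ℝ} (hH : H.IsHadamard) :
    ‖H‖ ^ 2 = Fintype.card Y := by
  cases isEmpty_or_nonempty Y
  · simp [Subsingleton.elim H 0]
  rw [sq, ← Matrix.l2_opNorm_conjTranspose_mul_self, hH.conjTranspose_mul]
  simp [norm_smul]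

lemma card_le_finrank_pow_three_of_isHadamard {H : Matrix Y Y ℝ} (hH : H.IsHadamard)
    (V : Submodule ℝ (Y → ℝ)) {f : Y → Y → ℝ} (hf : ∀ y, f y ∈ V)
    (hsign : ∀ x y, 0 < H x y * f y x) : Fintype.card Y ≤ Module.finrank ℝ V ^ 3 := by
  cases isEmpty_or_nonempty Y
  · simp
  have habs : ∀ x y, |f y x| = H x y * f y x := fun x y ↦ by
    rw [← abs_of_pos (hsign x y), abs_mul]
    rw [← Real.norm_eq_abs (H x y), CStarRing.norm_of_mem_unitary (hH.apply_mem x y), one_mul]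
  have hle := card_mul_card_le_finrank_pow_three_mul V hf
    (fun x y ↦ (right_ne_zero_of_mul (hsign x y).ne')) fun x y ↦ (habs x y).le
  rw [sq_l2_opNorm_of_isHadamard hH] at hle
  have hpos : (0 : ℝ) < Fintype.card Y := by exact_mod_cast Fintype.card_pos
  exact_mod_cast le_of_mul_le_mul_right hle hpos

end SignRank

section Walsh

variable {ι : Type*} [DecidableEq ι]

/-- The Walsh–Hadamard matrix, with rows and columns indexed by the subsets of `ι`: a row `σ`
is the point of the discrete cube whose coordinates in `σ` are `-1`, and a column `A` is the
monomial `∏ i ∈ A, x i`. -/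
def walsh (ι : Type*) [DecidableEq ι] : Matrix (Finset ι) (Finset ι) ℝ :=
  Matrix.of fun σ A ↦ (-1) ^ #(A ∩ σ)

lemma walsh_apply_eq_prod (σ A : Finset ι) :
    walsh ι σ A = ∏ i ∈ A, if i ∈ σ then -1 else 1 := by
  simp [walsh]

lemma walsh_mul_conjTranspose [Fintype ι] :
    walsh ι * (walsh ι).conjTranspose = (Fintype.card (Finset ι) : ℝ) • 1 := by
  ext σ τ
  have hprod : (walsh ι * (walsh ι).conjTranspose) σ τ =
      ∏ i, (1 + (if i ∈ σ then -1 else 1) * if i ∈ τ then -1 else (1 : ℝ)) := by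
    simp only [Matrix.mul_apply, Matrix.conjTranspose_apply, star_trivial, walsh_apply_eq_prod,
      ← prod_mul_distrib, prod_one_add, powerset_univ]
  rw [hprod]
  rcases eq_or_ne σ τ with rfl | hne
  · have htwo : ∀ i, 1 + (if i ∈ σ then -1 else 1) * (if i ∈ σ then -1 else (1 : ℝ)) = 2 :=
      fun i ↦ by split_ifs <;> norm_num
    simp only [htwo, prod_const, card_univ]
    simp
  · obtain ⟨i, hi⟩ : ∃ i, ¬(i ∈ σ ↔ i ∈ τ) := by simpa [Finset.ext_iff] using hne
    rw [Matrix.smul_apply, Matrix.one_apply_ne hne, smul_zero]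
    refine prod_eq_zero (mem_univ i) ?_
    by_cases hσ : i ∈ σ <;> simp_all

lemma isHadamard_walsh [Fintype ι] : (walsh ι).IsHadamard := by
  refine .of_mul_conjTranspose (fun σ A ↦ ?_) walsh_mul_conjTranspose ?_
  · simp [walsh, Unitary.mem_iff, ← mul_pow]
  · exact IsRegular.of_ne_zero (by simp)

end Walsh

section Polynomial

open MvPolynomial

variable {K ι : Type*} [Fintype K]

lemma setOf_sum_le_eq_biUnion_finsuppAntidiag [DecidableEq K] (D : ℕ) :
    {m : K →₀ ℕ | (m.sum fun _ e ↦ e) ≤ D} =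
      ((range (D + 1)).biUnion fun j ↦ finsuppAntidiag univ j : Finset (K →₀ ℕ)) := by
  ext m
  simp [Finsupp.sum_fintype, mem_finsuppAntidiag]

lemma finite_restrictTotalDegree (K F : Type*) [Finite K] [Field F] (D : ℕ) :
    Module.Finite F (restrictTotalDegree K F D) := by
  classical
  have := Fintype.ofFinite K
  have : Finite {m : K →₀ ℕ | (m.sum fun _ e ↦ e) ≤ D} := by
    rw [setOf_sum_le_eq_biUnion_finsuppAntidiag]
    exact Finset.finite_toSet _
  exact .of_basis (basisRestrictSupport F {m : K →₀ ℕ | (m.sum fun _ e ↦ e) ≤ D})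

lemma finrank_restrictTotalDegree (F : Type*) [Field F] (D : ℕ) :
    Module.finrank F (restrictTotalDegree K F D) =
      (D + Fintype.card K).choose (Fintype.card K) := by
  classical
  rw [restrictTotalDegree, Module.finrank_eq_nat_card_basis (basisRestrictSupport F _),
    setOf_sum_le_eq_biUnion_finsuppAntidiag, Nat.card_coe_set_eq, Set.ncard_coe_finset,
    card_biUnion, ← Nat.sum_range_multichoose]
  · simp [card_finsuppAntidiag_nat_eq_multichoose]
  · exact fun i _ j _ hij ↦ disjoint_left.2 fun m hi hj ↦
      hij ((mem_finsuppAntidiag.1 hi).1.symm.trans (mem_finsuppAntidiag.1 hj).1)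

variable [Fintype ι]

lemma totalDegree_prod_le_mul_card {K R : Type*} [CommSemiring R] {p : ι → MvPolynomial K R}
    {d : ℕ} (hp : ∀ i, (p i).totalDegree ≤ d) (A : Finset ι) :
    (∏ i ∈ A, p i).totalDegree ≤ d * Fintype.card ι :=
  calc (∏ i ∈ A, p i).totalDegree ≤ ∑ i ∈ A, (p i).totalDegree := totalDegree_finsetProd A p
    _ ≤ #A * d := sum_le_card_nsmul A _ d fun i _ ↦ hp i
    _ ≤ d * Fintype.card ι := by rw [mul_comm]; gcongr; exact card_le_univ A

lemma two_pow_card_le_of_forall_sign_pattern [DecidableEq ι] {p : ι → MvPolynomial K ℝ} {d : ℕ}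
    (hp : ∀ i, (p i).totalDegree ≤ d) {z : Finset ι → K → ℝ}
    (hz : ∀ σ i, 0 < (if i ∈ σ then -1 else 1) * eval (z σ) (p i)) :
    2 ^ Fintype.card ι ≤
      (d * Fintype.card ι + Fintype.card K).choose (Fintype.card K) ^ 3 := by
  let evalAt : MvPolynomial K ℝ →ₗ[ℝ] Finset ι → ℝ := LinearMap.pi fun σ ↦ (aeval (z σ)).toLinearMap
  let P := restrictTotalDegree K ℝ (d * Fintype.card ι)
  have : Module.Finite ℝ P := finite_restrictTotalDegree K ℝ _
  have hprod : ∀ A, evalAt (∏ i ∈ A, p i) ∈ P.map evalAt := fun A ↦ Submodule.mem_map_of_mem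
    ((mem_restrictTotalDegree K _ _).2 (totalDegree_prod_le_mul_card hp A))
  have hsign : ∀ σ A, 0 < walsh ι σ A * evalAt (∏ i ∈ A, p i) σ := fun σ A ↦ by
    have h : walsh ι σ A * evalAt (∏ i ∈ A, p i) σ =
        ∏ i ∈ A, (if i ∈ σ then -1 else 1) * eval (z σ) (p i) := by
      rw [prod_mul_distrib, walsh_apply_eq_prod]
      simp [evalAt, aeval_eq_eval]
    exact h ▸ prod_pos fun i _ ↦ hz σ i
  calc 2 ^ Fintype.card ι = Fintype.card (Finset ι) := Fintype.card_finset.symm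
    _ ≤ Module.finrank ℝ (P.map evalAt) ^ 3 :=
        card_le_finrank_pow_three_of_isHadamard isHadamard_walsh _ hprod hsign
    _ ≤ Module.finrank ℝ P ^ 3 := by gcongr; exact Submodule.finrank_map_le evalAt P
    _ = _ := by rw [finrank_restrictTotalDegree]

lemma exists_pos_forall_lt_of_pos {α : Type*} [Finite α] (v : α → ℝ) :
    ∃ δ > 0, ∀ a, 0 < v a → δ < v a := by
  have hsmall : ∀ᶠ δ in nhdsWithin 0 (Set.Ioi (0 : ℝ)), ∀ a, 0 < v a → δ < v a :=
    Filter.eventually_all.2 fun a ↦ Filter.eventually_imp_distrib_left.2 fun ha ↦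
      nhdsWithin_le_nhds (eventually_lt_nhds ha)
  exact (eventually_mem_nhdsWithin.and hsmall).exists

lemma two_pow_card_le_of_forall_positivity_pattern {p : ι → MvPolynomial K ℝ} {d : ℕ}
    (hp : ∀ i, (p i).totalDegree ≤ d) {z : Finset ι → K → ℝ}
    (hz : ∀ σ i, i ∈ σ ↔ 0 < eval (z σ) (p i)) :
    2 ^ Fintype.card ι ≤
      (d * Fintype.card ι + Fintype.card K).choose (Fintype.card K) ^ 3 := by
  classical
  obtain ⟨δ, hδ, hlt⟩ := exists_pos_forall_lt_of_pos
    fun a : Finset ι × ι ↦ eval (z a.1) (p a.2)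
  -- The shift by `δ` separates the zero values from the positive ones, which are finitely many.
  refine two_pow_card_le_of_forall_sign_pattern (p := fun i ↦ C δ - p i) (z := z)
    (fun i ↦ (totalDegree_sub _ _).trans (by simpa using hp i)) fun σ i ↦ ?_
  by_cases hi : i ∈ σ
  · simpa [hi] using hlt (σ, i) ((hz σ i).1 hi)
  · have hle : eval (z σ) (p i) ≤ 0 := not_lt.1 fun h ↦ hi ((hz σ i).2 h)
    simpa [hi] using hle.trans_lt hδ

end Polynomial

section Estimates

lemma choose_le_exp_mul_div_pow (n k : ℕ) :
    (n.choose k : ℝ) ≤ (Real.exp 1 * (n / k)) ^ k := by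
  rcases k.eq_zero_or_pos with rfl | hk
  · simp
  calc (n.choose k : ℝ) ≤ n ^ k / k.factorial := Nat.choose_le_pow_div k n
    _ = (k : ℝ) ^ k / k.factorial * (n / k) ^ k := by rw [div_pow]; field_simp
    _ ≤ Real.exp k * (n / k) ^ k := by
        gcongr
        exact Real.pow_div_factorial_le_exp _ k.cast_nonneg k
    _ = (Real.exp 1 * (n / k)) ^ k := by rw [mul_pow, ← Real.exp_nat_mul, mul_one]

open Filter Asymptotics in
lemma eventually_pow_lt_two_rpow (a b : ℝ) (n : ℕ) :
    ∀ᶠ x : ℝ in atTop, (a + b * x) ^ n < 2 ^ x := by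
  have hlinear : (fun x : ℝ ↦ a + b * x) =O[atTop] fun x ↦ x :=
    (isLittleO_const_id_atTop a).isBigO.add (isBigO_const_mul_self b _ _)
  have hlittle := (hlinear.pow n).trans_isLittleO
    (isLittleO_pow_exp_pos_mul_atTop (k := n) (Real.log_pos one_lt_two))
  filter_upwards [hlittle.def one_half_pos] with x hx
  rw [Real.rpow_def_of_pos two_pos]
  rw [Real.norm_of_nonneg (Real.exp_pos _).le] at hx
  linarith [le_abs_self ((a + b * x) ^ n), Real.norm_eq_abs ((a + b * x) ^ n),
    Real.exp_pos (Real.log 2 * x)]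

lemma exists_forall_le_mul_of_two_pow_le (d : ℕ) :
    ∃ C : ℕ, ∀ k h : ℕ, 2 ^ h ≤ (d * h + k).choose k ^ 3 → h ≤ C * k := by
  obtain ⟨x₀, hx₀⟩ :=
    (eventually_pow_lt_two_rpow (Real.exp 1) (Real.exp 1 * d) 3).exists_forall_of_atTop
  refine ⟨⌈x₀⌉₊, fun k h hle ↦ ?_⟩
  rcases k.eq_zero_or_pos with rfl | hk
  · have hpow : 2 ^ h ≤ 2 ^ 0 := by simpa using hle
    exact (Nat.pow_le_pow_iff_right one_lt_two).1 hpow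
  have hk' : (0 : ℝ) < k := by exact_mod_cast hk
  by_contra! hlt
  have hx : x₀ ≤ h / k := by
    rw [le_div_iff₀ hk']
    calc x₀ * k ≤ ⌈x₀⌉₊ * k := by gcongr; exact Nat.le_ceil x₀
      _ ≤ h := by exact_mod_cast hlt.le
  refine lt_irrefl ((2 : ℝ) ^ h) ?_
  calc (2 : ℝ) ^ h ≤ ((d * h + k).choose k) ^ 3 := by exact_mod_cast hle
    _ ≤ ((Real.exp 1 * ((d * h + k : ℕ) / k)) ^ k) ^ 3 := by
        gcongr
        exact choose_le_exp_mul_div_pow _ k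
    _ = ((Real.exp 1 + Real.exp 1 * d * (h / k)) ^ 3) ^ k := by
        rw [pow_right_comm]
        congr 2
        push_cast
        field_simp
        ring
    _ < ((2 : ℝ) ^ (h / k : ℝ)) ^ k := pow_lt_pow_left₀ (hx₀ _ hx) (by positivity) hk.ne'
    _ = 2 ^ h := by
        rw [← Real.rpow_mul_natCast two_pos.le, div_mul_cancel₀ _ hk'.ne', Real.rpow_natCast]

lemma sum_range_choose_mul_pow_le {ε : ℝ} (h0 : 0 ≤ ε) (h1 : ε ≤ 1) (N q : ℕ) :
    (∑ j ∈ range (q + 1), (N.choose j : ℝ)) * ε ^ q ≤ (1 + ε) ^ N := by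
  calc (∑ j ∈ range (q + 1), (N.choose j : ℝ)) * ε ^ q
      ≤ ∑ j ∈ range (q + 1), ε ^ j * (N.choose j : ℝ) := by
        rw [mul_comm, mul_sum]
        gcongr ∑ _ ∈ _, ?_ * _ with j hj
        exact pow_le_pow_of_le_one h0 h1 (Nat.lt_succ_iff.1 (mem_range.1 hj))
    _ ≤ ∑ j ∈ range (max q N + 1), ε ^ j * (N.choose j : ℝ) :=
        sum_le_sum_of_subset_of_nonneg (range_mono (by lia)) fun _ _ _ ↦ by positivity
    _ = ∑ j ∈ range (N + 1), ε ^ j * (N.choose j : ℝ) :=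
        (sum_subset (range_mono (by lia)) fun j _ hj ↦ by
          simp [Nat.choose_eq_zero_of_lt (Nat.lt_of_succ_le (not_lt.1 (mem_range.not.1 hj)))]).symm
    _ = (1 + ε) ^ N := by simp [add_comm (1 : ℝ), add_pow]

lemma one_add_le_two_rpow {ε : ℝ} (h0 : 0 ≤ ε) : 1 + ε ≤ 2 ^ (2 * ε) := by
  rw [Real.rpow_def_of_pos two_pos]
  nlinarith [Real.add_one_le_exp (Real.log 2 * (2 * ε)), Real.log_two_gt_d9]

lemma sum_range_choose_le_two_rpow {N q : ℕ} {ε a : ℝ} (h0 : 0 < ε) (h1 : ε ≤ 1 / 2)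
    (hq : q ≤ a * ε * N) :
    ((∑ j ∈ range (q + 1), N.choose j : ℕ) : ℝ) ≤
      2 ^ (N * (a + 2) * ε * Real.logb 2 (1 / ε)) := by
  have hlog : 1 ≤ Real.logb 2 (1 / ε) := by
    rw [Real.le_logb_iff_rpow_le one_lt_two (by positivity), Real.rpow_one, le_div_iff₀ h0]
    linarith
  have hpow : (2 : ℝ) ^ (Real.logb 2 (1 / ε) * q) * ε ^ q = 1 := by
    rw [Real.rpow_mul_natCast two_pos.le, Real.rpow_logb two_pos (by norm_num) (by positivity),
      ← mul_pow, one_div_mul_cancel h0.ne', one_pow]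
  rw [Nat.cast_sum]
  calc ∑ j ∈ range (q + 1), (N.choose j : ℝ)
      = (∑ j ∈ range (q + 1), (N.choose j : ℝ)) * ε ^ q * 2 ^ (Real.logb 2 (1 / ε) * q) := by
        rw [mul_assoc, mul_comm (ε ^ q), hpow, mul_one]
    _ ≤ (2 ^ (2 * ε)) ^ N * 2 ^ (Real.logb 2 (1 / ε) * q) := by
        gcongr
        exact (sum_range_choose_mul_pow_le h0.le (by linarith) N q).trans
          (pow_le_pow_left₀ (by positivity) (one_add_le_two_rpow h0.le) N)
    _ = 2 ^ (2 * ε * N * 1 + Real.logb 2 (1 / ε) * q) := by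
        rw [mul_one, Real.rpow_add two_pos, Real.rpow_mul_natCast two_pos.le (2 * ε)]
    _ ≤ 2 ^ (2 * ε * N * Real.logb 2 (1 / ε) + Real.logb 2 (1 / ε) * (a * ε * N)) := by
        gcongr
        exact one_le_two
    _ = _ := by ring_nf

lemma card_filter_card_le {ι : Type*} [Fintype ι] (q : ℕ) :
    #{D : Finset ι | #D ≤ q} ≤ ∑ j ∈ range (q + 1), (Fintype.card ι).choose j := by
  classical
  have hunion : ({D : Finset ι | #D ≤ q} : Finset _) =
      (range (q + 1)).biUnion fun j ↦ powersetCard j univ := by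
    ext D
    simp
  simpa [hunion] using card_biUnion_le (s := range (q + 1)) (t := fun j ↦ powersetCard j univ)

end Estimates

section Patterns

open MvPolynomial

variable {K ι : Type*} [Fintype ι]

open Classical in
/-- The positivity patterns `{i | 0 < p i z}` of a family of real polynomials, as the point `z`
varies; zero values are grouped with the negative ones. -/
noncomputable def positivityPatterns (p : ι → MvPolynomial K ℝ) : Finset (Finset ι) :=
  {P | ∃ z, ∀ i, i ∈ P ↔ 0 < eval z (p i)}

lemma mem_positivityPatterns {p : ι → MvPolynomial K ℝ} {P : Finset ι} :
    P ∈ positivityPatterns p ↔ ∃ z, ∀ i, i ∈ P ↔ 0 < eval z (p i) := by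
  simp [positivityPatterns]

variable [Fintype K] {p : ι → MvPolynomial K ℝ} {d : ℕ}

lemma two_pow_card_le_of_shatters [DecidableEq ι] (hp : ∀ i, (p i).totalDegree ≤ d)
    {s : Finset ι} (hs : (positivityPatterns p).Shatters s) :
    2 ^ #s ≤ (d * #s + Fintype.card K).choose (Fintype.card K) ^ 3 := by
  have hex : ∀ σ : Finset s, ∃ z : K → ℝ, ∀ i, i ∈ σ ↔ 0 < eval z (p i) := fun σ ↦ by
    obtain ⟨P, hP, hPσ⟩ := hs (t := σ.map (Function.Embedding.subtype _)) (map_subtype_subset σ)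
    obtain ⟨z, hz⟩ := mem_positivityPatterns.1 hP
    exact ⟨z, fun i ↦ by simpa [hz] using (Finset.ext_iff.1 hPσ i).symm⟩
  choose z hz using hex
  simpa using two_pow_card_le_of_forall_positivity_pattern (fun i : s ↦ hp i) hz

lemma card_positivityPatterns_le (hp : ∀ i, (p i).totalDegree ≤ d) {q : ℕ}
    (hq : ∀ h, 2 ^ h ≤ (d * h + Fintype.card K).choose (Fintype.card K) ^ 3 → h ≤ q) :
    #(positivityPatterns p) ≤ ∑ j ∈ range (q + 1), (Fintype.card ι).choose j := by
  classical
  have hvc : (positivityPatterns p).vcDim ≤ q := Finset.sup_le fun s hs ↦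
    hq #s (two_pow_card_le_of_shatters hp (mem_shatterer.1 hs))
  calc #(positivityPatterns p) ≤ #(positivityPatterns p).shatterer := card_le_card_shatterer _
    _ ≤ ∑ j ∈ Iic (positivityPatterns p).vcDim, (Fintype.card ι).choose j :=
        card_shatterer_le_sum_vcDim
    _ ≤ ∑ j ∈ range (q + 1), (Fintype.card ι).choose j := by
        rw [Nat.range_succ_eq_Iic]
        exact sum_le_sum_of_subset (Iic_subset_Iic.2 hvc)

variable [DecidableEq ι]

/-- The sets within Hamming distance `q` of a member of `𝒜`. -/
def hammingThickening (q : ℕ) (𝒜 : Finset (Finset ι)) : Finset (Finset ι) :=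
  {A | ∃ P ∈ 𝒜, #(symmDiff P A) ≤ q}

lemma card_hammingThickening_le (q : ℕ) (𝒜 : Finset (Finset ι)) :
    #(hammingThickening q 𝒜) ≤ #𝒜 * ∑ j ∈ range (q + 1), (Fintype.card ι).choose j := by
  have hsub : hammingThickening q 𝒜 ⊆
      image₂ symmDiff 𝒜 ({D | #D ≤ q} : Finset (Finset ι)) := fun A hA ↦ by
    obtain ⟨P, hP, hPA⟩ := (mem_filter.1 hA).2
    exact mem_image₂.2 ⟨P, hP, symmDiff P A, by simpa using hPA, symmDiff_symmDiff_cancel_left P A⟩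
  calc #(hammingThickening q 𝒜) ≤ #𝒜 * #({D | #D ≤ q} : Finset (Finset ι)) :=
        (card_le_card hsub).trans (card_image₂_le _ _ _)
    _ ≤ _ := by gcongr; exact card_filter_card_le q

lemma abs_le_abs_sub_of_pos_iff_not_pos {s t : ℝ} (h : ¬(0 < t ↔ 0 < s)) : |s| ≤ |s - t| := by
  rcases lt_or_ge 0 s with hs | hs
  · have ht : t ≤ 0 := not_lt.1 fun ht ↦ h (by simp [hs, ht])
    rw [abs_of_pos hs]
    exact (by linarith : s ≤ s - t).trans (le_abs_self _)
  · have ht : 0 < t := by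
      by_contra ht
      exact h (by simp [ht, hs.not_gt])
    rw [abs_of_nonpos hs]
    exact (by linarith : -s ≤ -(s - t)).trans (neg_le_abs _)

lemma card_symmDiff_mul_iInf_abs_le (T T' : ι → ℝ) :
    #(symmDiff ({I | 0 < T' I} : Finset ι) ({I | 0 < T I} : Finset ι)) * (⨅ I, |T I|) ≤
      ∑ I, |T I - T' I| := by
  let D : Finset ι := symmDiff ({I | 0 < T' I} : Finset ι) ({I | 0 < T I} : Finset ι)
  have hD : ∀ I ∈ D, ⨅ I, |T I| ≤ |T I - T' I| := fun I hI ↦ by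
    have hinf : ⨅ I, |T I| ≤ |T I| := ciInf_le (Set.finite_range _).bddBelow I
    refine hinf.trans (abs_le_abs_sub_of_pos_iff_not_pos ?_)
    simp only [D, mem_symmDiff, mem_filter_univ] at hI
    tauto
  calc #D * (⨅ I, |T I|) = ∑ _I ∈ D, ⨅ I, |T I| := by simp
    _ ≤ ∑ I ∈ D, |T I - T' I| := sum_le_sum hD
    _ ≤ ∑ I, |T I - T' I| := sum_le_univ_sum_of_nonneg fun _ ↦ abs_nonneg _

lemma positivityPattern_mem_hammingThickening {K : Type*} {p : ι → MvPolynomial K ℝ} {T T' : ι → ℝ}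
    {z : K → ℝ} (hz : ∀ I, T' I = eval z (p I)) {b : ℝ}
    (hlt : ∑ I, |T I - T' I| < b * ⨅ I, |T I|) :
    ({I | 0 < T I} : Finset ι) ∈ hammingThickening ⌊b⌋₊ (positivityPatterns p) := by
  refine mem_filter.2 ⟨mem_univ _, ({I | 0 < T' I} : Finset ι), ?_, Nat.le_floor ?_⟩
  · exact mem_positivityPatterns.2 ⟨z, by simp [hz]⟩
  · exact (lt_of_mul_lt_mul_right ((card_symmDiff_mul_iInf_abs_le T T').trans_lt hlt)
      (Real.iInf_nonneg fun _ ↦ abs_nonneg _)).le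

end Patterns

section Tensors

variable {d : ℕ} {n : Fin d → ℕ}

/-- The generic tensor of rank at most `m`: its entry at `I`, as a polynomial in the coordinates
of the vectors `u s i`. -/
noncomputable def genericTensor (m : ℕ) (n : Fin d → ℕ) (I : (i : Fin d) → Fin (n i)) :
    MvPolynomial (Fin m × Σ i, Fin (n i)) ℝ :=
  ∑ s, ∏ i, MvPolynomial.X (s, ⟨i, I i⟩)

lemma totalDegree_genericTensor_le (m : ℕ) (I : (i : Fin d) → Fin (n i)) :
    (genericTensor m n I).totalDegree ≤ d :=
  MvPolynomial.totalDegree_finsetSum_le fun s _ ↦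
    (MvPolynomial.totalDegree_finsetProd _ _).trans (by simp)

lemma exists_eval_genericTensor_eq {m : ℕ} {T : ((i : Fin d) → Fin (n i)) → ℝ}
    (hT : tensorRankLE T m) : ∃ z, ∀ I, T I = MvPolynomial.eval z (genericTensor m n I) := by
  obtain ⟨u, hu⟩ := hT
  exact ⟨fun k ↦ u k.1 k.2.1 k.2.2, fun I ↦ by simp [genericTensor, hu]⟩

/-- The largest rank `⌊ε N / max_j n_j⌋` of an approximating tensor; it is `0` if the maximum
vanishes, in particular for `d = 0`. -/
noncomputable def rankBound (ε : ℝ) (n : Fin d → ℕ) : ℕ :=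
  ⌊ε * (∏ i, n i : ℕ) / (univ.sup n : ℕ)⌋₊

lemma tensorRankLE_mono {T : ((i : Fin d) → Fin (n i)) → ℝ} {m m' : ℕ} (hd : d ≠ 0) (hm : m ≤ m')
    (hT : tensorRankLE T m) : tensorRankLE T m' := by
  obtain ⟨k, rfl⟩ := Nat.exists_eq_add_of_le hm
  obtain ⟨u, hu⟩ := hT
  exact ⟨Fin.append u 0, fun I ↦ by simp [hu, Fin.sum_univ_add, hd]⟩

lemma tensorRankLE_rankBound {T : ((i : Fin d) → Fin (n i)) → ℝ} {m : ℕ} {ε : ℝ}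
    (hm : (m : ℝ) ≤ ε * (∏ i, n i : ℕ) / (univ.sup n : ℕ)) (hT : tensorRankLE T m) :
    tensorRankLE T (rankBound ε n) := by
  have hle : m ≤ rankBound ε n := Nat.le_floor hm
  rcases eq_or_ne d 0 with rfl | hd
  · have hzero : rankBound ε n = 0 := by simp [rankBound]
    have heq : m = rankBound ε n := by lia
    exact heq ▸ hT
  · exact tensorRankLE_mono hd hle hT

lemma card_variables_genericTensor_le {ε : ℝ} (hε : 0 ≤ ε) (n : Fin d → ℕ) :
    (Fintype.card (Fin (rankBound ε n) × Σ i, Fin (n i)) : ℝ) ≤ d * ε * (∏ i, n i : ℕ) := by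
  have hsum : ∑ i, n i ≤ d * univ.sup n := by
    simpa using sum_le_card_nsmul univ n (univ.sup n) fun i hi ↦ le_sup hi
  have hrank : rankBound ε n * ((univ.sup n : ℕ) : ℝ) ≤ ε * (∏ i, n i : ℕ) :=
    calc rankBound ε n * ((univ.sup n : ℕ) : ℝ)
        ≤ ε * (∏ i, n i : ℕ) / (univ.sup n : ℕ) * ((univ.sup n : ℕ) : ℝ) := by
          gcongr
          exact Nat.floor_le (by positivity)
      _ ≤ ε * (∏ i, n i : ℕ) := by
          rcases eq_or_ne (univ.sup n) 0 with hzero | hne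
          · rw [hzero, Nat.cast_zero, mul_zero]
            positivity
          · rw [div_mul_cancel₀ _ (Nat.cast_ne_zero.2 hne)]
  calc (Fintype.card (Fin (rankBound ε n) × Σ i, Fin (n i)) : ℝ)
      = rankBound ε n * (∑ i, n i : ℕ) := by simp
    _ ≤ rankBound ε n * (d * univ.sup n : ℕ) := by gcongr
    _ = d * (rankBound ε n * ((univ.sup n : ℕ) : ℝ)) := by push_cast; ring
    _ ≤ d * (ε * (∏ i, n i : ℕ)) := by gcongr
    _ = d * ε * (∏ i, n i : ℕ) := by ring

/-- The positivity patterns excluded from `S*`: those which agree, up to `ε N` entries, with the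
pattern of a tensor of rank at most `rankBound ε n`. -/
noncomputable def badPatterns (ε : ℝ) (n : Fin d → ℕ) :
    Finset (Finset ((i : Fin d) → Fin (n i))) :=
  hammingThickening ⌊ε * (∏ i, n i : ℕ)⌋₊ (positivityPatterns (genericTensor (rankBound ε n) n))

lemma card_badPatterns_le {C : ℕ}
    (hC : ∀ k h : ℕ, 2 ^ h ≤ (d * h + k).choose k ^ 3 → h ≤ C * k) {ε : ℝ} (h0 : 0 < ε)
    (h1 : ε ≤ 1 / 2) (n : Fin d → ℕ) :
    (#(badPatterns ε n) : ℝ) ≤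
      2 ^ ((∏ i, n i : ℕ) * ((C * d + 2) + (1 + 2)) * ε * Real.logb 2 (1 / ε)) := by
  let N := ∏ i, n i
  let k := Fintype.card (Fin (rankBound ε n) × Σ i, Fin (n i))
  have hcard : Fintype.card ((i : Fin d) → Fin (n i)) = N := by simp [N]
  have hvars : ((C * k : ℕ) : ℝ) ≤ C * d * ε * N :=
    calc ((C * k : ℕ) : ℝ) = C * k := Nat.cast_mul C k
      _ ≤ C * (d * ε * N) := by gcongr; exact card_variables_genericTensor_le h0.le n
      _ = C * d * ε * N := by ring
  have hpatterns : (#(positivityPatterns (genericTensor (rankBound ε n) n)) : ℝ) ≤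
      2 ^ (N * (C * d + 2) * ε * Real.logb 2 (1 / ε)) := by
    have hle := card_positivityPatterns_le (totalDegree_genericTensor_le (n := n) _) (hC k)
    rw [hcard] at hle
    exact (Nat.cast_le.2 hle).trans (sum_range_choose_le_two_rpow h0 h1 hvars)
  have hball : ((∑ j ∈ range (⌊ε * N⌋₊ + 1), N.choose j : ℕ) : ℝ) ≤
      2 ^ (N * (1 + 2) * ε * Real.logb 2 (1 / ε)) :=
    sum_range_choose_le_two_rpow h0 h1 (by rw [one_mul]; exact Nat.floor_le (by positivity))
  calc (#(badPatterns ε n) : ℝ) ≤ #(positivityPatterns (genericTensor (rankBound ε n) n)) *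
        (∑ j ∈ range (⌊ε * N⌋₊ + 1), N.choose j : ℕ) := by
        exact_mod_cast hcard ▸ card_hammingThickening_le _ _
    _ ≤ 2 ^ (N * (C * d + 2) * ε * Real.logb 2 (1 / ε)) *
        2 ^ (N * (1 + 2) * ε * Real.logb 2 (1 / ε)) := by gcongr
    _ = _ := by rw [← Real.rpow_add two_pos]; congr 1; simp only [N]; ring

/-- The sign tensor which is `1` on `A` and `-1` off `A`. -/
def signTensor (A : Finset ((i : Fin d) → Fin (n i))) (I : (i : Fin d) → Fin (n i)) : ℝ :=
  if I ∈ A then 1 else -1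

lemma isSignTensor_signTensor (A : Finset ((i : Fin d) → Fin (n i))) :
    IsSignTensor (signTensor A) := fun _ ↦ ite_eq_or_eq _ _ _

lemma signTensor_pos_iff {A : Finset ((i : Fin d) → Fin (n i))} {I : (i : Fin d) → Fin (n i)} :
    0 < signTensor A I ↔ I ∈ A := by
  by_cases hI : I ∈ A <;> simp [signTensor, hI]

lemma signTensor_injective : (signTensor (n := n)).Injective := fun A B hAB ↦ by
  ext I
  rw [← signTensor_pos_iff, hAB, signTensor_pos_iff]

lemma real_sign_pos_iff {r : ℝ} : 0 < Real.sign r ↔ 0 < r := by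
  rcases lt_trichotomy r 0 with hr | rfl | hr
  · simp [Real.sign_of_neg hr, hr.not_gt, zero_le_one.not_gt]
  · simp
  · simp [Real.sign_of_pos hr, hr]

lemma eq_of_signTensor_eq_sign {A : Finset ((i : Fin d) → Fin (n i))}
    {T : ((i : Fin d) → Fin (n i)) → ℝ} (hA : signTensor A = fun I ↦ Real.sign (T I)) :
    A = ({I | 0 < T I} : Finset _) := by
  ext I
  rw [← signTensor_pos_iff, hA, mem_filter_univ, real_sign_pos_iff]

end Tensors

/-- For every `d` there are `c(d), ε₀(d) > 0` such that for every `ε ∈ (0, ε₀)` and all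
`n₁, …, n_d`, with `N = n₁⋯n_d`, there is a set `S*` of signum tensors of cardinality at
least `2^N − 2^{N c ε log₂(1/ε)}` such that every tensor `T` with nonzero entries and
sign pattern in `S*` is `ℓ_1`-far from all tensors of rank at most `ε N / max n_j`:
`∑_I |T_I − T̃_I| ≥ ε N · min_I |T_I|`. -/
theorem almost_all_sign_tensors_rigid (d : ℕ) :
    ∃ c : ℝ, 0 < c ∧ ∃ ε₀ : ℝ, 0 < ε₀ ∧
      ∀ ε : ℝ, 0 < ε → ε < ε₀ → ∀ n : Fin d → ℕ,
        ∃ Sstar : Set (((i : Fin d) → Fin (n i)) → ℝ),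
          (∀ S ∈ Sstar, IsSignTensor S) ∧
          (2 : ℝ) ^ (∏ i, n i : ℕ) -
              (2 : ℝ) ^ ((∏ i, n i : ℕ) * c * ε * Real.logb 2 (1 / ε)) ≤
            (Nat.card Sstar : ℝ) ∧
          ∀ T : ((i : Fin d) → Fin (n i)) → ℝ, (∀ I, T I ≠ 0) →
            (fun I => Real.sign (T I)) ∈ Sstar →
            ∀ T' : ((i : Fin d) → Fin (n i)) → ℝ,
              (∃ m : ℕ, (m : ℝ) ≤ ε * (∏ i, n i : ℕ) / (Finset.univ.sup n : ℕ) ∧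
                tensorRankLE T' m) →
              ε * (∏ i, n i : ℕ) * (⨅ I, |T I|) ≤ ∑ I, |T I - T' I| := by
  obtain ⟨C, hC⟩ := exists_forall_le_mul_of_two_pow_le d
  refine ⟨(C * d + 2) + (1 + 2), by positivity, 1 / 2, one_half_pos, fun ε h0 h1 n ↦
    ⟨signTensor '' ((badPatterns ε n)ᶜ : Finset _), ?_, ?_, ?_⟩⟩
  · rintro _ ⟨A, -, rfl⟩
    exact isSignTensor_signTensor A
  · have hbad := card_badPatterns_le hC h0 h1.le n
    have hcompl : (#(badPatterns ε n)ᶜ : ℝ) + #(badPatterns ε n) = 2 ^ (∏ i, n i) := by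
      exact_mod_cast (card_compl_add_card _).trans (by simp)
    rw [Nat.card_image_of_injective signTensor_injective, Nat.card_coe_set_eq,
      Set.ncard_coe_finset]
    linarith
  · rintro T - ⟨A, hA, hAT⟩ T' ⟨m, hm, hrank⟩
    by_contra! hlt
    obtain ⟨z, hz⟩ := exists_eval_genericTensor_eq (tensorRankLE_rankBound hm hrank)
    refine mem_compl.1 hA ?_
    rw [eq_of_signTensor_eq_sign hAT]
    exact positivityPattern_mem_hammingThickening hz hlt
end

section
/- Let T ∈ ℝ^{n_1×⋯×n_d} be a tensor and m ∈ ℕ. Then inf_{rank(T̃) ≤ m} ∑_I |T_I − T̃_I| ≥ (inf_{S : rank_±(S) ≤ m+1} #{I : sign(T_I) ≠ S_I}) · min_I |T_I|, where the first infimum is over tensors T̃ ∈ ℝ^{n_1×⋯×n_d} of rank at most m and the second is over signum tensors S ∈ {−1,1}^{n_1×⋯×n_d} of signum rank at most m+1. -/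
/-- The signum rank of a signum tensor `S` is at most `m` if there is a tensor `T` of
rank at most `m`, all of whose entries are nonzero and satisfy `sign(T_I) = S_I`. -/
def signumRankLE {d : ℕ} {n : Fin d → ℕ} (S : ((i : Fin d) → Fin (n i)) → ℝ) (m : ℕ) :
    Prop :=
  ∃ T : ((i : Fin d) → Fin (n i)) → ℝ,
    tensorRankLE T m ∧ ∀ I, T I ≠ 0 ∧ Real.sign (T I) = S I

/-!
Let `T'` have rank at most `m`. Adding a small constant `ε > 0` to `T'` raises the rank by at most
one, keeps the negative entries negative and makes all others positive, so `S = sign (T' + ε)` is a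
signum tensor of signum rank at most `m + 1` whose entries agree weakly in sign with those of `T'`.
Wherever `sign (T I) ≠ S I`, the entry `T' I` lies weakly on the other side of `0` from `T I`, hence
`|T I - T' I| ≥ |T I|`; summing over these `I` bounds the `ℓ₁`-distance.
-/

theorem exists_pos_forall_add_neg {ι α : Type*} [Finite ι] [AddCommGroup α] [LinearOrder α]
    [IsOrderedAddMonoid α] [DenselyOrdered α] [Nontrivial α] (f : ι → α) :
    ∃ ε, 0 < ε ∧ ∀ i, f i < 0 → f i + ε < 0 := by
  have hfin : ((fun i => -f i) '' {i | f i < 0}).Finite := (Set.toFinite _).image _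
  obtain ⟨ε, hpos, hlt⟩ := (Set.finite_singleton (0 : α)).exists_between' hfin <| by
    rintro _ rfl _ ⟨i, hi, rfl⟩
    exact neg_pos.2 hi
  exact ⟨ε, hpos 0 rfl, fun i hi => lt_neg_iff_add_neg'.1 (hlt _ ⟨i, hi, rfl⟩)⟩

theorem abs_le_abs_sub_of_sign_ne {a b s : ℝ} (hs : s = 1 ∨ s = -1) (hsb : 0 ≤ s * b)
    (hne : Real.sign a ≠ s) : |a| ≤ |a - b| := by
  rcases hs with rfl | rfl
  · have ha : a ≤ 0 := le_of_not_gt fun h => hne (Real.sign_of_pos h)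
    rw [abs_of_nonpos ha, abs_sub_comm]
    exact (by linarith : -a ≤ b - a).trans (le_abs_self _)
  · have ha : 0 ≤ a := le_of_not_gt fun h => hne (Real.sign_of_neg h)
    rw [abs_of_nonneg ha]
    exact (by linarith : a ≤ a - b).trans (le_abs_self _)

theorem natCard_subtype_mul_iInf_le_sum {ι : Type*} [Fintype ι] {p : ι → Prop} {f g : ι → ℝ}
    (hg : ∀ i, 0 ≤ g i) (hfg : ∀ i, p i → f i ≤ g i) :
    (Nat.card {i // p i} : ℝ) * ⨅ i, f i ≤ ∑ i, g i := by
  classical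
  rw [Nat.card_eq_fintype_card, Fintype.card_subtype, ← nsmul_eq_mul]
  calc
    Finset.card {i | p i} • ⨅ i, f i ≤ ∑ i with p i, g i :=
      Finset.card_nsmul_le_sum _ _ _ fun i hi =>
        (ciInf_le (Set.finite_range f).bddBelow i).trans (hfg i (Finset.mem_filter.1 hi).2)
    _ ≤ ∑ i, g i := Finset.sum_le_univ_sum_of_nonneg hg

namespace tensorRankLE

variable {d m m' : ℕ} {n : Fin d → ℕ} {T T' : ((i : Fin d) → Fin (n i)) → ℝ}

theorem add (hT : tensorRankLE T m) (hT' : tensorRankLE T' m') :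
    tensorRankLE (fun I => T I + T' I) (m + m') := by
  obtain ⟨u, hu⟩ := hT
  obtain ⟨v, hv⟩ := hT'
  exact ⟨Fin.append u v, fun I => by
    simp only [hu, hv, Fin.sum_univ_add, Fin.append_left, Fin.append_right]⟩

-- A tensor of order zero is a scalar, and the only rank-one scalar is the empty product `1`.
theorem const {c : ℝ} (hc : d = 0 → c = 1) :
    tensorRankLE (fun _ : (i : Fin d) → Fin (n i) => c) 1 := by
  cases d with
  | zero => exact ⟨fun _ _ _ => 1, fun _ => by simp [hc rfl]⟩
  | succ d =>
    refine ⟨fun _ i _ => (Pi.mulSingle 0 c : Fin (d + 1) → ℝ) i, fun _ => ?_⟩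
    rw [Fin.sum_univ_one, Fintype.prod_pi_mulSingle']

theorem nonneg_of_order_eq_zero (hT : tensorRankLE T m) (hd : d = 0)
    (I : (i : Fin d) → Fin (n i)) : 0 ≤ T I := by
  obtain ⟨u, hu⟩ := hT
  subst hd
  simp [hu]

theorem exists_pos_add_const (hT : tensorRankLE T m) :
    ∃ ε, 0 < ε ∧ (∀ I, T I < 0 → T I + ε < 0) ∧ tensorRankLE (fun I => T I + ε) (m + 1) := by
  rcases eq_or_ne d 0 with hd | hd
  · exact ⟨1, one_pos, fun I hI => absurd hI (hT.nonneg_of_order_eq_zero hd I).not_gt,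
      hT.add (const fun _ => rfl)⟩
  · obtain ⟨ε, hε, hneg⟩ := exists_pos_forall_add_neg T
    exact ⟨ε, hε, hneg, hT.add (const fun h => absurd h hd)⟩

theorem exists_isSignTensor_signumRankLE (hT : tensorRankLE T m) :
    ∃ S, IsSignTensor S ∧ signumRankLE S (m + 1) ∧ ∀ I, 0 ≤ S I * T I := by
  obtain ⟨ε, hε, hneg, hrank⟩ := hT.exists_pos_add_const
  have hcases (I) : (T I < 0 ∧ T I + ε < 0) ∨ (0 ≤ T I ∧ 0 < T I + ε) :=
    (lt_or_ge (T I) 0).imp (fun h => ⟨h, hneg I h⟩) fun h => ⟨h, add_pos_of_nonneg_of_pos h hε⟩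
  have hne (I) : T I + ε ≠ 0 := (hcases I).elim (fun h => h.2.ne) fun h => h.2.ne'
  refine ⟨fun I => Real.sign (T I + ε), fun I => (Real.sign_apply_eq_of_ne_zero _ (hne I)).symm,
    ⟨_, hrank, fun I => ⟨hne I, rfl⟩⟩, fun I => ?_⟩
  rcases hcases I with ⟨hT_neg, hshift_neg⟩ | ⟨hT_nonneg, hshift_pos⟩
  · simpa [Real.sign_of_neg hshift_neg] using hT_neg.le
  · simpa [Real.sign_of_pos hshift_pos] using hT_nonneg

end tensorRankLE

/-- The `ℓ_1`-distance from a tensor `T` to tensors of rank at most `m` is at least the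
minimal Hamming distance from `sign T` to signum tensors of signum rank at most `m+1`,
multiplied by `min_I |T_I|`. -/
theorem l1_tensor_approx_ge_sign_distance (d m : ℕ) (n : Fin d → ℕ)
    (T : ((i : Fin d) → Fin (n i)) → ℝ) :
    ((sInf {c : ℕ | ∃ S : ((i : Fin d) → Fin (n i)) → ℝ, IsSignTensor S ∧
        signumRankLE S (m + 1) ∧
        c = Nat.card {I : (i : Fin d) → Fin (n i) // Real.sign (T I) ≠ S I}} : ℕ) : ℝ) *
      (⨅ I, |T I|) ≤
    sInf {r : ℝ | ∃ T' : ((i : Fin d) → Fin (n i)) → ℝ, tensorRankLE T' m ∧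
      r = ∑ I, |T I - T' I|} := by
  refine le_csInf ⟨_, _, ⟨fun _ _ _ => 1, fun _ => rfl⟩, rfl⟩ ?_
  rintro _ ⟨T', hT', rfl⟩
  obtain ⟨S, hS, hrank, hST'⟩ := hT'.exists_isSignTensor_signumRankLE
  calc
    _ ≤ (Nat.card {I // Real.sign (T I) ≠ S I} : ℝ) * ⨅ I, |T I| := by
      refine mul_le_mul_of_nonneg_right ?_ (Real.iInf_nonneg fun _ => abs_nonneg _)
      exact Nat.cast_le.2 (Nat.sInf_le ⟨S, hS, hrank, rfl⟩)
    _ ≤ ∑ I, |T I - T' I| :=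
      natCard_subtype_mul_iInf_le_sum (fun _ => abs_nonneg _) fun I hI =>
        abs_le_abs_sub_of_sign_ne (hS I) (hST' I) hI
end

section
/- For every d ∈ ℕ there is a constant c(d) > 0 with the following property. Let (X_i, μ_i), i = 1,…,d, be measure spaces, X = X_1×⋯×X_d with the product measure μ, and let F ⊆ L_1(X, μ). Suppose F γ-shatters an (n_1×⋯×n_d)-product family A of pairwise disjoint measurable sets, and set N = n_1⋯n_d. Then for every m ≤ c(d) N / max_j{n_j} one has Θ_m(F, L_1(X,μ)) ≥ c(d) γ N. -/
open MeasureTheory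

/-!
The integrals of a rank-`m` tensor over the `N` boxes of the product family are, up to truncation,
values of `N` polynomials of degree at most `d` in `m * ∑ i, n i` variables. By a Warren-type
bound such a family realizes few sign vectors, even after discarding a small proportion of the
boxes. Hence some sign vector disagrees with every rank-`m` tensor on a fixed proportion of the
boxes, each of which contributes at least `γ` to the distance from the tensor to the function
that shattering provides for this sign vector.

For the bound on sign vectors, choose generic thresholds `c i` so small that every realized sign
vector `σ` is realized on the region `c i ≤ σ i * p i x`. Let `S` be a maximal set of constraints
simultaneously active on this region; by genericity `S` has at most as many elements as there are
variables. For large `K` the polynomial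
`∑ j, x j ^ (n + 1) + K * ∑ i ∈ S, (p i x ^ 2 - c i ^ 2) ^ 2` has a local minimum at a point with
the signs `σ`, and it has few critical points because its leading form is diagonal.
-/

namespace TensorApproximation

open MvPolynomial Filter Topology

section CriticalPoints

variable {κ R F : Type*}

-- The relations rewrite a monomial with some exponent at least `n` to lower degree, so `φ` is
-- determined by the remaining monomials.
theorem linearMap_eq_zero_of_X_pow_mul_eq [CommSemiring R] {M : Type*} [AddCommMonoid M]
    [Module R M] {n : ℕ} {q : κ → MvPolynomial κ R} (hq : ∀ j, (q j).totalDegree < n)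
    {φ : MvPolynomial κ R →ₗ[R] M} (hφ : ∀ j p, φ (X j ^ n * p) = φ (q j * p))
    (hφ_small : ∀ α : κ →₀ ℕ, (∀ j, α j < n) → φ (monomial α 1) = 0) : φ = 0 := by
  suffices ∀ d, ∀ p : MvPolynomial κ R, p.totalDegree = d → φ p = 0 from
    LinearMap.ext fun p => this _ p rfl
  intro d
  induction d using Nat.strong_induction_on with | _ d ih
  intro p hp
  rw [p.as_sum, map_sum]
  refine Finset.sum_eq_zero fun α hα => ?_
  suffices φ (monomial α 1) = 0 by
    rw [← mul_one (coeff α p), ← smul_eq_mul, ← smul_monomial, map_smul, this, smul_zero]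
  by_cases hsmall : ∀ j, α j < n
  · exact hφ_small α hsmall
  obtain ⟨j, hj⟩ := not_forall.mp hsmall
  obtain ⟨β, rfl⟩ : ∃ β, α = Finsupp.single j n + β :=
    exists_add_of_le (Finsupp.single_le_iff.mpr (not_lt.mp hj))
  have hdeg : n + β.degree ≤ d := calc
    _ = (Finsupp.single j n + β).degree := by simp
    _ ≤ d := hp ▸ le_totalDegree hα
  have hlower : (q j * monomial β 1).totalDegree < d := calc
    _ ≤ (q j).totalDegree + β.degree :=
      (totalDegree_mul _ _).trans (by gcongr; exact totalDegree_monomial_le β _)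
    _ < n + β.degree := by gcongr; exact hq j
    _ ≤ d := hdeg
  rw [← one_mul (1 : R), ← monomial_mul, ← X_pow_eq_monomial, hφ]
  exact ih _ hlower _ rfl

theorem linearIndependent_eval [CommRing R] [IsDomain R] :
    LinearIndependent R fun (z : κ → R) (p : MvPolynomial κ R) => eval z p := by
  have hinj : Function.Injective fun z : κ → R =>
      ((eval z : MvPolynomial κ R →+* R) : MvPolynomial κ R →* R) := fun z w h =>
    funext fun j => by simpa using DFunLike.congr_fun h (X j)
  exact (linearIndependent_monoidHom (MvPolynomial κ R) R).comp _ hinj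

theorem card_le_pow_of_pow_eq_eval [Fintype κ] [Field F] {n : ℕ} {q : κ → MvPolynomial κ F}
    (hq : ∀ j, (q j).totalDegree < n) {Z : Finset (κ → F)}
    (hZ : ∀ z ∈ Z, ∀ j, z j ^ n = eval z (q j)) : Z.card ≤ n ^ Fintype.card κ := by
  classical
  have hindep : LinearIndependent F fun (z : Z) (a : κ → Fin n) => ∏ j, z.1 j ^ (a j : ℕ) := by
    rw [Fintype.linearIndependent_iff]
    intro b hb
    let φ : MvPolynomial κ F →ₗ[F] F := ∑ z : Z, b z • (aeval z.1).toLinearMap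
    have hφ_apply (p) : φ p = ∑ z : Z, b z * eval z.1 p := by
      simp [φ, LinearMap.sum_apply, aeval_eq_eval]
    have hφ : φ = 0 := by
      refine linearMap_eq_zero_of_X_pow_mul_eq hq (fun j p => ?_) fun α hα => ?_
      · simp only [hφ_apply, map_mul, map_pow, eval_X, hZ _ (Subtype.prop _)]
      · have := congr_fun hb fun j => ⟨α j, hα j⟩
        simpa [hφ_apply, eval_monomial, Finsupp.prod_fintype] using this
    have heval : LinearIndependent F fun (z : Z) (p : MvPolynomial κ F) => eval z.1 p :=
      (linearIndependent_eval (κ := κ) (R := F)).comp _ Subtype.val_injective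
    refine Fintype.linearIndependent_iff.mp heval b (funext fun p => ?_)
    simpa [hφ_apply] using LinearMap.congr_fun hφ p
  simpa using hindep.fintype_card_le_finrank

theorem totalDegree_pderiv_le [CommSemiring R] (j : κ) (p : MvPolynomial κ R) :
    (pderiv j p).totalDegree ≤ p.totalDegree := by
  nth_rw 1 [p.as_sum]
  rw [map_sum]
  refine totalDegree_finsetSum_le fun α hα => ?_
  rw [pderiv_monomial]
  calc _ ≤ (α - Finsupp.single j 1).degree := totalDegree_monomial_le _ _
    _ ≤ α.degree := Finsupp.degree_mono tsub_le_self
    _ ≤ p.totalDegree := le_totalDegree hα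

theorem card_le_pow_of_pderiv_eq_zero [Fintype κ] [Field F] [CharZero F] {n : ℕ}
    {f : MvPolynomial κ F} (hf : f.totalDegree < n) {Z : Finset (κ → F)}
    (hZ : ∀ z ∈ Z, ∀ j, eval z (pderiv j (∑ i, X i ^ (n + 1) + f)) = 0) :
    Z.card ≤ n ^ Fintype.card κ := by
  classical
  refine card_le_pow_of_pow_eq_eval (q := fun j => C (-(n + 1 : F)⁻¹) * pderiv j f)
    (fun j => ?_) fun z hz j => ?_
  · calc _ ≤ (pderiv j f).totalDegree := by simpa using totalDegree_mul (C _) (pderiv j f)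
      _ ≤ f.totalDegree := totalDegree_pderiv_le j f
      _ < n := hf
  · have hcrit : (n + 1) * z j ^ n + eval z (pderiv j f) = 0 := by
      simpa [pderiv_pow, pderiv_X, Pi.single_apply] using hZ z hz j
    have hn : (n + 1 : F) ≠ 0 := by exact_mod_cast n.succ_ne_zero
    simp only [map_mul, eval_C]
    field_simp
    linear_combination hcrit

theorem hasDerivAt_eval_update [DecidableEq κ] {𝕜 : Type*} [NontriviallyNormedField 𝕜]
    (p : MvPolynomial κ 𝕜) (z : κ → 𝕜) (j : κ) :
    HasDerivAt (fun t => eval (Function.update z j t) p) (eval z (pderiv j p)) (z j) := by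
  induction p using MvPolynomial.induction_on with
  | C a => simpa using hasDerivAt_const (z j) a
  | add p q hp hq => simpa [Pi.add_def] using hp.add hq
  | mul_X p i hp =>
    have hX : HasDerivAt (fun t => eval (Function.update z j t) (X i : MvPolynomial κ 𝕜))
        (eval z (pderiv j (X i))) (z j) := by
      by_cases h : i = j
      · subst h
        simpa using hasDerivAt_id' (z i)
      · simpa [h, pderiv_X_of_ne h] using hasDerivAt_const (z j) (z i)
    simpa [pderiv_mul, Pi.mul_def, add_comm, mul_comm] using hp.mul hX

theorem eval_pderiv_eq_zero_of_isLocalMin {p : MvPolynomial κ ℝ} {z : κ → ℝ}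
    (hz : IsLocalMin (fun w => eval w p) z) (j : κ) : eval z (pderiv j p) = 0 := by
  classical
  have hupdate : Tendsto (Function.update z j) (𝓝 (z j)) (𝓝 z) := by
    have hcont : Continuous (Function.update z j) := continuous_const.update j continuous_id
    simpa using hcont.tendsto (z j)
  have hmin : IsLocalMin (fun t => eval (Function.update z j t) p) (z j) := by
    simpa [IsLocalMin, IsMinFilter] using hupdate.eventually hz
  exact hmin.hasDerivAt_eq_zero (hasDerivAt_eval_update p z j)

end CriticalPoints

section Penalty

variable {E ι κ : Type*}

theorem eventually_forall_lt_add_mul_of_isClosed [TopologicalSpace E] {h Φ : E → ℝ} {B : Set E}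
    (hB : IsClosed B) (hh : Continuous h) (hh_coercive : Tendsto h (cocompact E) atTop)
    (hΦ : Continuous Φ) (hΦB : ∀ w ∈ B, 0 < Φ w) (a : ℝ) :
    ∀ᶠ K in atTop, ∀ w ∈ B, a < h w + K * Φ w := by
  obtain ⟨T, hT, hTh⟩ := mem_cocompact.mp (hh_coercive.eventually_gt_atTop a)
  have hquot : ContinuousOn (fun w => (a - h w) / Φ w) (T ∩ B) :=
    (continuousOn_const.sub hh.continuousOn).div hΦ.continuousOn fun w hw => (hΦB w hw.2).ne'
  obtain ⟨M, hM⟩ := ((hT.inter_right hB).image_of_continuousOn hquot).bddAbove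
  filter_upwards [eventually_gt_atTop M, eventually_ge_atTop 0] with K hKM hK w hw
  by_cases hwT : w ∈ T
  · have hlt : (a - h w) / Φ w < K := (hM (Set.mem_image_of_mem _ ⟨hwT, hw⟩)).trans_lt hKM
    linarith [(div_lt_iff₀ (hΦB w hw)).mp hlt]
  · exact (hTh hwT).trans_le (le_add_of_nonneg_right (mul_nonneg hK (hΦB w hw).le))

theorem eventually_exists_isLocalMin_add_mul [TopologicalSpace E] {h Φ : E → ℝ} {Ω U : Set E}
    (hΩ : IsClosed Ω) (hU : IsOpen U) (hUΩ : U ⊆ Ω) (hh : Continuous h)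
    (hh_coercive : Tendsto h (cocompact E) atTop) (hΦ : Continuous Φ) (hΦ_nonneg : ∀ w, 0 ≤ Φ w)
    {y : E} (hy : y ∈ Ω) (hΦy : Φ y = 0) (hΦ_pos : ∀ w ∈ Ω \ U, 0 < Φ w) :
    ∀ᶠ K in atTop, ∃ z ∈ U, IsLocalMin (fun w => h w + K * Φ w) z := by
  filter_upwards [eventually_ge_atTop 0, eventually_forall_lt_add_mul_of_isClosed
    (hΩ.sdiff hU) hh hh_coercive hΦ hΦ_pos (h y)] with K hK hboundary
  have hcont : Continuous fun w => h w + K * Φ w := by fun_prop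
  have hfar : ∀ᶠ w in cocompact E ⊓ 𝓟 Ω, h y + K * Φ y ≤ h w + K * Φ w := by
    filter_upwards [(hh_coercive.eventually_ge_atTop (h y)).filter_mono inf_le_left] with w hw
    have := mul_nonneg hK (hΦ_nonneg w)
    rw [hΦy]
    linarith
  obtain ⟨z, hzΩ, hzmin⟩ := hcont.continuousOn.exists_isMinOn' hΩ hy hfar
  have hzU : z ∈ U := by
    by_contra hzU
    have hzy : h z + K * Φ z ≤ h y := by simpa [hΦy] using hzmin hy
    exact (hboundary z ⟨hzΩ, hzU⟩).not_ge hzy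
  exact ⟨z, hzU, hzmin.isLocalMin (mem_of_superset (hU.mem_nhds hzU) hUΩ)⟩

theorem exists_maximal_active_set [Finite ι] {α : Type*} [PartialOrder α] {g : ι → E → α}
    {c : ι → α} {x : E} (hx : ∀ i, c i ≤ g i x) :
    ∃ S : Finset ι, (∃ y, (∀ i, c i ≤ g i y) ∧ ∀ i ∈ S, g i y = c i) ∧
      ∀ w, (∀ i, c i ≤ g i w) → (∀ i ∈ S, g i w = c i) → ∀ i ∉ S, c i < g i w := by
  classical
  obtain ⟨S, hS, hmax⟩ := Set.Finite.exists_maximal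
    (s := {S : Finset ι | ∃ y, (∀ i, c i ≤ g i y) ∧ ∀ i ∈ S, g i y = c i})
    (Set.toFinite _) ⟨∅, x, hx, by simp⟩
  refine ⟨S, hS, fun w hw hwS i hi => (hw i).lt_of_ne' fun hwi => hi ?_⟩
  have hinsert : ∀ j ∈ insert i S, g j w = c j := by simpa [hwi] using hwS
  exact hmax ⟨w, hw, hinsert⟩ (Finset.subset_insert i S) (Finset.mem_insert_self i S)

theorem sum_sq_sub_sq_sq_eq_zero_iff {S : Finset ι} {a c : ι → ℝ} (ha : ∀ i ∈ S, 0 ≤ a i)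
    (hc : ∀ i ∈ S, 0 ≤ c i) :
    ∑ i ∈ S, (a i ^ 2 - c i ^ 2) ^ 2 = 0 ↔ ∀ i ∈ S, a i = c i := by
  rw [Finset.sum_eq_zero_iff_of_nonneg fun i _ => sq_nonneg _]
  refine forall₂_congr fun i hi => ?_
  rw [pow_eq_zero_iff two_ne_zero, sub_eq_zero, sq_eq_sq₀ (ha i hi) (hc i hi)]

-- A penalty on a maximal active set is positive on the boundary of the region where the other
-- constraints hold, so for large `K` the minimizer over that region is interior.
theorem exists_active_set_eventually_isLocalMin [Finite ι] [TopologicalSpace E] {g : ι → E → ℝ}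
    (hg : ∀ i, Continuous (g i)) {c : ι → ℝ} (hc : ∀ i, 0 < c i) {h : E → ℝ} (hh : Continuous h)
    (hh_coercive : Tendsto h (cocompact E) atTop) {x : E} (hx : ∀ i, c i ≤ g i x) :
    ∃ S : Finset ι, (∃ y, ∀ i ∈ S, g i y = c i) ∧ ∀ᶠ K in atTop, ∃ z, (∀ i, 0 < g i z) ∧
      IsLocalMin (fun w => h w + K * ∑ i ∈ S, (g i w ^ 2 - c i ^ 2) ^ 2) z := by
  classical
  obtain ⟨S, ⟨y, hy, hyS⟩, hmax⟩ := exists_maximal_active_set hx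
  refine ⟨S, ⟨y, hyS⟩, ?_⟩
  let b : ι → ℝ := S.piecewise 0 c
  have hbc : b ≤ c := S.piecewise_le_of_le_of_le (fun i => (hc i).le) le_rfl
  have hb : 0 ≤ b := S.le_piecewise_of_le_of_le le_rfl fun i => (hc i).le
  let Ω : Set E := {w | ∀ i, b i ≤ g i w}
  let U : Set E := {w | ∀ i, b i < g i w}
  have hΩ : IsClosed Ω := by
    simp only [Ω, Set.ofPred_forall]
    exact isClosed_iInter fun i => isClosed_le continuous_const (hg i)
  have hU : IsOpen U := by
    simp only [U, Set.ofPred_forall]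
    exact isOpen_iInter_of_finite fun i => isOpen_lt continuous_const (hg i)
  have hΦ_nonneg (w : E) : 0 ≤ ∑ i ∈ S, (g i w ^ 2 - c i ^ 2) ^ 2 :=
    Finset.sum_nonneg fun i _ => sq_nonneg _
  have hΦ_pos : ∀ w ∈ Ω \ U, 0 < ∑ i ∈ S, (g i w ^ 2 - c i ^ 2) ^ 2 := by
    refine fun w ⟨hwΩ, hwU⟩ => (hΦ_nonneg w).lt_of_ne' fun hΦw => hwU ?_
    have hwS : ∀ i ∈ S, g i w = c i := (sum_sq_sub_sq_sq_eq_zero_iff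
      (fun i _ => (hb i).trans (hwΩ i)) fun i _ => (hc i).le).mp hΦw
    have hw : ∀ i, c i ≤ g i w := fun i => by
      by_cases hi : i ∈ S
      · exact (hwS i hi).ge
      · simpa [b, hi] using hwΩ i
    intro i
    by_cases hi : i ∈ S
    · simpa [b, hi, hwS i hi] using hc i
    · exact (hbc i).trans_lt (hmax w hw hwS i hi)
  filter_upwards [eventually_exists_isLocalMin_add_mul hΩ hU (fun w hw i => (hw i).le) hh
    hh_coercive (by fun_prop) hΦ_nonneg (fun i => (hbc i).trans (hy i))
    (Finset.sum_eq_zero fun i hi => by simp [hyS i hi]) hΦ_pos] with K ⟨z, hzU, hz⟩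
  exact ⟨z, fun i => (hb i).trans_lt (hzU i), hz⟩

theorem tendsto_sum_pow_cocompact_atTop [Fintype κ] {n : ℕ} (hn : Even n) (hn₀ : n ≠ 0) :
    Tendsto (fun w : κ → ℝ => ∑ j, w j ^ n) (cocompact (κ → ℝ)) atTop := by
  have hnorm (w : κ → ℝ) : ‖w‖ ≤ 1 + ∑ j, w j ^ n := by
    have hpow : ∀ j ∈ Finset.univ, 0 ≤ w j ^ n := fun j _ => hn.pow_nonneg _
    have hbound_nonneg := add_nonneg zero_le_one (Finset.sum_nonneg hpow)
    refine (pi_norm_le_iff_of_nonneg hbound_nonneg).mpr fun j => ?_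
    calc ‖w j‖ ≤ 1 + ‖w j‖ ^ n := by
          rcases le_total ‖w j‖ 1 with hle | hge
          · exact hle.trans (le_add_of_nonneg_right (by positivity))
          · exact (le_self_pow₀ hge hn₀).trans (le_add_of_nonneg_left zero_le_one)
      _ = 1 + w j ^ n := by rw [Real.norm_eq_abs, hn.pow_abs]
      _ ≤ 1 + ∑ j, w j ^ n := by
          gcongr
          exact Finset.single_le_sum hpow (Finset.mem_univ j)
  refine tendsto_atTop_mono (fun w => ?_)
    (tendsto_atTop_add_const_right _ (-1) (tendsto_norm_cocompact_atTop (E := κ → ℝ)))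
  linarith [hnorm w]

end Penalty

section Genericity

variable {E ι : Type*} [NormedAddCommGroup E] [NormedSpace ℝ E] [FiniteDimensional ℝ E]
  {f : ι → E → ℝ}

theorem dimH_setOf_exists_forall_mem_eq_le [Fintype ι] (hf : ∀ i, ContDiff ℝ 1 (f i))
    (S : Finset ι) :
    dimH {c : ι → ℝ | ∃ x, ∀ i ∈ S, f i x = c i} ≤
      (Module.finrank ℝ E + (Fintype.card ι - S.card) : ℕ) := by
  classical
  let G : E × ({i // i ∉ S} → ℝ) → ι → ℝ := fun xy i =>
    if hi : i ∈ S then f i xy.1 else xy.2 ⟨i, hi⟩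
  have hG : ContDiff ℝ 1 G := by
    refine contDiff_pi.mpr fun i => ?_
    by_cases hi : i ∈ S
    · simp only [G, hi, dite_true]
      exact (hf i).comp contDiff_fst
    · simp only [G, hi, dite_false]
      fun_prop
  have hsub : {c : ι → ℝ | ∃ x, ∀ i ∈ S, f i x = c i} ⊆ Set.range G := by
    rintro c ⟨x, hx⟩
    refine ⟨(x, fun i => c i), funext fun i => ?_⟩
    by_cases hi : i ∈ S
    · simp [G, hi, hx i hi]
    · simp [G, hi]
  have hcard : Fintype.card {i // i ∉ S} = Fintype.card ι - S.card := by
    simp [Fintype.card_subtype_compl]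
  simpa [hcard] using (dimH_mono hsub).trans hG.dimH_range_le

theorem dense_setOf_forall_card_le_finrank [Finite ι] (hf : ∀ i, ContDiff ℝ 1 (f i)) :
    Dense {c : ι → ℝ | ∀ (S : Finset ι) (x : E), (∀ i ∈ S, f i x = c i) →
      S.card ≤ Module.finrank ℝ E} := by
  cases nonempty_fintype ι
  let large : Set (Finset ι) := {S | Module.finrank ℝ E < S.card}
  have hcodim : ∀ S ∈ large,
      Module.finrank ℝ E + (Fintype.card ι - S.card) < Fintype.card ι := fun S hS => by
    have hS_large : Module.finrank ℝ E < S.card := hS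
    have hS_le := S.card_le_univ
    omega
  have hdense : Dense (⋃ S ∈ large, {c : ι → ℝ | ∃ x, ∀ i ∈ S, f i x = c i})ᶜ := by
    rcases large.eq_empty_or_nonempty with hempty | ⟨S₀, hS₀⟩
    · simp [hempty]
    refine dense_compl_of_dimH_lt_finrank ?_
    rw [dimH_bUnion large.to_countable, Module.finrank_fintype_fun_eq_card]
    calc _ ≤ ((Fintype.card ι - 1 : ℕ) : ENNReal) := iSup₂_le fun S hS =>
          (dimH_setOf_exists_forall_mem_eq_le hf S).trans
            (by exact_mod_cast Nat.le_sub_one_of_lt (hcodim S hS))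
      _ < Fintype.card ι := by
          exact_mod_cast Nat.sub_one_lt_of_lt (hcodim S₀ hS₀)
  refine hdense.mono fun c (hc : c ∉ _) S x hx => not_lt.mp fun hS => hc ?_
  exact Set.mem_biUnion (show S ∈ large from hS) ⟨x, hx⟩

end Genericity

section SignPatterns

variable {ι κ : Type*}

/-- `σ` prescribes the signs of the polynomials `p i`, `i ∈ s`, at a common point where none of
them vanishes. -/
def IsSignPatternOn (p : ι → MvPolynomial κ ℝ) (s : Set ι) (σ : ι → ℤˣ) : Prop :=
  ∃ x, ∀ i ∈ s, 0 < ((σ i : ℤ) : ℝ) * eval x (p i)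

theorem intUnits_eq_of_cast_mul_pos {a : ℝ} {s t : ℤˣ} (hs : 0 < ((s : ℤ) : ℝ) * a)
    (ht : 0 < ((t : ℤ) : ℝ) * a) : s = t := by
  rcases Int.units_eq_one_or s with rfl | rfl <;> rcases Int.units_eq_one_or t with rfl | rfl <;>
    simp_all [lt_asymm]

theorem cast_intUnits_mul_sq (s : ℤˣ) (a : ℝ) : (((s : ℤ) : ℝ) * a) ^ 2 = a ^ 2 := by
  rcases Int.units_eq_one_or s with rfl | rfl <;> simp

theorem exists_generic_thresholds [Finite ι] [Fintype κ] (p : ι → MvPolynomial κ ℝ) {ε : ℝ}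
    (hε : 0 < ε) :
    ∃ c : ι → ℝ, (∀ i, 0 < c i ∧ c i < ε) ∧ ∀ (S : Finset ι) (x : κ → ℝ),
      (∀ i ∈ S, eval x (p i) ^ 2 = c i ^ 2) → S.card ≤ Fintype.card κ := by
  have hcontDiff (i) : ContDiff ℝ 1 fun x : κ → ℝ => eval x (p i) ^ 2 := by
    have heval := AnalyticOnNhd.eval_mvPolynomial (𝕜 := ℝ) (p i)
    exact (contDiffOn_univ.mp heval.contDiffOn_of_completeSpace).pow 2
  have hopen : IsOpen (Set.univ.pi fun _ : ι => Set.Ioo 0 (ε ^ 2)) :=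
    isOpen_set_pi Set.finite_univ fun _ _ => isOpen_Ioo
  have hnonempty : (Set.univ.pi fun _ : ι => Set.Ioo 0 (ε ^ 2)).Nonempty :=
    Set.univ_pi_nonempty_iff.mpr fun _ => Set.nonempty_Ioo.mpr (by positivity)
  obtain ⟨e, he, hgeneric⟩ :=
    (dense_setOf_forall_card_le_finrank hcontDiff).inter_open_nonempty _ hopen hnonempty
  have he_mem (i) : 0 < e i ∧ e i < ε ^ 2 := he i trivial
  refine ⟨fun i => √(e i), fun i => ⟨Real.sqrt_pos.mpr (he_mem i).1,
    (Real.sqrt_lt' hε).mpr (he_mem i).2⟩, fun S x hx => ?_⟩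
  simpa using hgeneric S x fun i hi => (hx i hi).trans (Real.sq_sqrt (he_mem i).1.le)

theorem exists_pos_forall_le_of_finset {α : Type*} [Finite ι] {s : Finset α} {f : α → ι → ℝ}
    (hf : ∀ a ∈ s, ∀ i, 0 < f a i) : ∃ ε > 0, ∀ a ∈ s, ∀ i, ε ≤ f a i := by
  have hsmall : ∀ᶠ ε in 𝓝[>] (0 : ℝ), ∀ a ∈ s, ∀ i, ε ≤ f a i :=
    (Filter.eventually_all_finset s).mpr fun a ha => eventually_all.mpr fun i =>
      nhdsWithin_le_nhds (Iic_mem_nhds (hf a ha i))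
  exact (hsmall.and self_mem_nhdsWithin).exists.imp fun ε hε => hε.symm

/-- The polynomial whose critical points are counted in `card_le_of_isSignPatternOn`. Its first
term is coercive and of the largest degree; the second one penalizes leaving the locus
`|p i| = c i`, `i ∈ S`. The squares make it independent of the signs of the `p i`. -/
noncomputable def penalizedPolynomial [Fintype κ] (p : ι → MvPolynomial κ ℝ) (c : ι → ℝ) (n : ℕ)
    (K : ℝ) (S : Finset ι) : MvPolynomial κ ℝ :=
  ∑ j, X j ^ (n + 1) + C K * ∑ i ∈ S, (p i ^ 2 - C (c i ^ 2)) ^ 2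

theorem totalDegree_penalty_le {p : ι → MvPolynomial κ ℝ} {D : ℕ}
    (hp : ∀ i, (p i).totalDegree ≤ D) (c : ι → ℝ) (K : ℝ) (S : Finset ι) :
    (C K * ∑ i ∈ S, (p i ^ 2 - C (c i ^ 2)) ^ 2).totalDegree ≤ 4 * D := by
  refine (totalDegree_mul _ _).trans ?_
  rw [totalDegree_C, zero_add]
  refine totalDegree_finsetSum_le fun i _ => ?_
  calc _ ≤ 2 * (p i ^ 2 - C (c i ^ 2)).totalDegree := totalDegree_pow _ _
    _ ≤ 2 * (p i ^ 2).totalDegree := by gcongr; exact totalDegree_sub_C_le _ _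
    _ ≤ 2 * (2 * (p i).totalDegree) := by gcongr; exact totalDegree_pow _ _
    _ ≤ 4 * D := by linarith [hp i]

theorem exists_active_set_eventually_isLocalMin_eval_penalizedPolynomial [Finite ι] [Fintype κ]
    (p : ι → MvPolynomial κ ℝ) {c : ι → ℝ} (hc : ∀ i, 0 < c i) {n : ℕ} (hn : Odd n) {σ : ι → ℤˣ}
    {x : κ → ℝ} (hx : ∀ i, c i ≤ ((σ i : ℤ) : ℝ) * eval x (p i)) :
    ∃ S : Finset ι, (∃ y, ∀ i ∈ S, eval y (p i) ^ 2 = c i ^ 2) ∧ ∀ᶠ K in atTop,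
      ∃ z, (∀ i, 0 < ((σ i : ℤ) : ℝ) * eval z (p i)) ∧
        IsLocalMin (fun w => eval w (penalizedPolynomial p c n K S)) z := by
  obtain ⟨S, ⟨y, hy⟩, hmin⟩ := exists_active_set_eventually_isLocalMin
    (g := fun i w => ((σ i : ℤ) : ℝ) * eval w (p i))
    (fun i => continuous_const.mul (continuous_eval (p i))) hc
    (h := fun w : κ → ℝ => ∑ j, w j ^ (n + 1)) (by fun_prop)
    (tendsto_sum_pow_cocompact_atTop hn.add_one n.succ_ne_zero) hx
  refine ⟨S, ⟨y, fun i hi => ?_⟩, ?_⟩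
  · rw [← hy i hi, cast_intUnits_mul_sq]
  · simpa only [penalizedPolynomial, map_add, map_sum, map_mul, map_pow, map_sub, eval_X, eval_C,
      cast_intUnits_mul_sq] using hmin

theorem card_filter_card_le_eq_sum_choose [Fintype ι] (k : ℕ) :
    (Finset.univ.filter fun S : Finset ι => S.card ≤ k).card =
      ∑ j ∈ Finset.range (k + 1), (Fintype.card ι).choose j := by
  rw [Finset.card_eq_sum_card_fiberwise (f := Finset.card) (t := Finset.range (k + 1))
    fun S hS => by simpa [Nat.lt_succ_iff] using hS]
  refine Finset.sum_congr rfl fun j hj => ?_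
  rw [← Finset.card_univ, ← Finset.card_powersetCard]
  congr 1
  ext S
  simp only [Finset.mem_range] at hj
  simp only [Finset.mem_filter, Finset.mem_univ, true_and, Finset.mem_powersetCard,
    Finset.subset_univ]
  omega

theorem card_le_of_isSignPatternOn [Fintype ι] [Fintype κ] {p : ι → MvPolynomial κ ℝ} {D : ℕ}
    (hp : ∀ i, (p i).totalDegree ≤ D) {𝓡 : Finset (ι → ℤˣ)}
    (h𝓡 : ∀ σ ∈ 𝓡, IsSignPatternOn p Set.univ σ) :
    𝓡.card ≤ (4 * D + 1) ^ Fintype.card κ *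
      ∑ j ∈ Finset.range (Fintype.card κ + 1), (Fintype.card ι).choose j := by
  classical
  choose! x hx using h𝓡
  obtain ⟨ε, hε, hεx⟩ := exists_pos_forall_le_of_finset fun σ hσ i => hx σ hσ i trivial
  obtain ⟨c, hc, hgeneric⟩ := exists_generic_thresholds p hε
  choose! S hS hmin using fun σ hσ =>
    exists_active_set_eventually_isLocalMin_eval_penalizedPolynomial p (fun i => (hc i).1)
      (n := 4 * D + 1) ⟨2 * D, by ring⟩ fun i => (hc i).2.le.trans (hεx σ hσ i)
  obtain ⟨K, hK⟩ := ((Filter.eventually_all_finset 𝓡).mpr hmin).exists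
  choose! z hz_pos hz_min using hK
  rw [← card_filter_card_le_eq_sum_choose]
  refine Finset.card_le_mul_card_image_of_maps_to (f := S) (fun σ hσ => ?_) _ fun T _ => ?_
  · obtain ⟨y, hy⟩ := hS σ hσ
    simpa using hgeneric (S σ) y hy
  have hz_inj : Set.InjOn z (𝓡.filter fun σ => S σ = T) := fun σ hσ τ hτ h => funext fun i =>
    intUnits_eq_of_cast_mul_pos (hz_pos σ (Finset.mem_filter.mp hσ).1 i)
      (h ▸ hz_pos τ (Finset.mem_filter.mp hτ).1 i)
  rw [← Finset.card_image_of_injOn hz_inj]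
  refine card_le_pow_of_pderiv_eq_zero (Nat.lt_succ_of_le (totalDegree_penalty_le hp c K T))
    (Finset.forall_mem_image.mpr fun σ hσ j => ?_)
  obtain ⟨hσ𝓡, rfl⟩ := Finset.mem_filter.mp hσ
  exact eval_pderiv_eq_zero_of_isLocalMin (hz_min σ hσ𝓡) j

theorem card_le_of_isSignPatternOn_compl [Fintype ι] [Fintype κ] {p : ι → MvPolynomial κ ℝ}
    {D : ℕ} (hp : ∀ i, (p i).totalDegree ≤ D) (E : Finset ι) {𝓡 : Finset (ι → ℤˣ)}
    (h𝓡 : ∀ σ ∈ 𝓡, IsSignPatternOn p (E : Set ι)ᶜ σ) :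
    𝓡.card ≤ (4 * D + 1) ^ Fintype.card κ *
      (∑ j ∈ Finset.range (Fintype.card κ + 1), (Fintype.card ι).choose j) * 2 ^ E.card := by
  classical
  have hcard : (Finset.univ : Finset (E → ℤˣ)).card = 2 ^ E.card := by
    simp [Fintype.card_units_int]
  rw [← hcard]
  refine Finset.card_le_mul_card_image_of_maps_to (f := fun σ (i : E) => σ i)
    (fun _ _ => Finset.mem_univ _) _ fun τ _ => ?_
  -- On `E` the signs are fixed, so there `p` may be replaced by constants with these signs.
  let q : ι → MvPolynomial κ ℝ := fun i => if hi : i ∈ E then C ((τ ⟨i, hi⟩ : ℤ) : ℝ) else p i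
  refine card_le_of_isSignPatternOn (p := q) (fun i => ?_) fun σ hσ => ?_
  · by_cases hi : i ∈ E
    · simp only [q, hi, dite_true, totalDegree_C, Nat.zero_le]
    · simpa [q, hi] using hp i
  · obtain ⟨hσ𝓡, rfl⟩ := Finset.mem_filter.mp hσ
    obtain ⟨x, hx⟩ := h𝓡 σ hσ𝓡
    refine ⟨x, fun i _ => ?_⟩
    by_cases hi : i ∈ E
    · simp only [q, hi, dite_true, eval_C]
      rcases Int.units_eq_one_or (σ i) with h | h <;> simp [h]
    · simpa [q, hi] using hx i hi

theorem sum_range_choose_le (N k : ℕ) {t : ℝ} (ht : 1 ≤ t) :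
    ((∑ j ∈ Finset.range (k + 1), N.choose j : ℕ) : ℝ) ≤ t ^ k * (1 + t⁻¹) ^ N := by
  have : 0 < t := one_pos.trans_le ht
  rw [← Fintype.card_fin N, ← card_filter_card_le_eq_sum_choose, Finset.card_eq_sum_ones,
    Nat.cast_sum]
  calc _ ≤ ∑ S : Finset (Fin N) with S.card ≤ k, t ^ k * t⁻¹ ^ S.card :=
        Finset.sum_le_sum fun S hS => by
          rw [Nat.cast_one, inv_pow, ← div_eq_mul_inv, one_le_div (by positivity)]
          exact pow_le_pow_right₀ ht (Finset.mem_filter.mp hS).2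
    _ ≤ ∑ S : Finset (Fin N), t ^ k * t⁻¹ ^ S.card :=
        Finset.sum_le_univ_sum_of_nonneg fun S => by positivity
    _ = t ^ k * (1 + t⁻¹) ^ Fintype.card (Fin N) := by
        rw [← Finset.mul_sum, add_comm, ← Fintype.sum_pow_mul_eq_add_pow]
        simp

-- The constants come from `2 * 8 ^ 2 = 128` and `3 / 2 * (9 / 8) ^ 2 < 2`.
theorem pow_mul_sum_choose_mul_sum_choose_lt {D Q N k e : ℕ}
    (hQ : (128 * (4 * D + 1) : ℝ) ≤ (3 / 2) ^ Q) (hN : N ≠ 0) (hk : k ≤ e) (he : Q * e ≤ N) :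
    (4 * D + 1) ^ k * (∑ j ∈ Finset.range (k + 1), N.choose j) * 2 ^ e *
      ∑ j ∈ Finset.range (e + 1), N.choose j < 2 ^ N := by
  rw [← Nat.cast_lt (α := ℝ)]
  push_cast
  have hchoose (k : ℕ) : ∑ j ∈ Finset.range (k + 1), (N.choose j : ℝ) ≤ 8 ^ k * (9 / 8) ^ N := by
    convert sum_range_choose_le N k (t := 8) (by norm_num) using 1 <;> norm_num
  have hbase : (1 : ℝ) ≤ 4 * D + 1 := le_add_of_nonneg_left (by positivity)
  calc _ ≤ (4 * D + 1 : ℝ) ^ e * (8 ^ e * (9 / 8) ^ N) * 2 ^ e * (8 ^ e * (9 / 8) ^ N) := by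
        gcongr
        · exact (hchoose k).trans (by gcongr; norm_num)
        · exact hchoose e
    _ = (128 * (4 * D + 1)) ^ e * (81 / 64) ^ N := by
        rw [show (128 : ℝ) = 8 * 2 * 8 by norm_num,
          show (81 / 64 : ℝ) = 9 / 8 * (9 / 8) by norm_num]
        simp only [mul_pow]
        ring
    _ ≤ ((3 / 2) ^ Q) ^ e * (81 / 64) ^ N := by gcongr
    _ ≤ (3 / 2) ^ N * (81 / 64) ^ N := by
        rw [← pow_mul]
        gcongr
        norm_num
    _ = (243 / 128) ^ N := by rw [← mul_pow]; norm_num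
    _ < 2 ^ N := by gcongr; norm_num

theorem exists_forall_not_isSignPatternOn_compl [Fintype ι] [Nonempty ι] [Fintype κ]
    {p : ι → MvPolynomial κ ℝ} {D Q : ℕ} (hp : ∀ i, (p i).totalDegree ≤ D)
    (hQ : (128 * (4 * D + 1) : ℝ) ≤ (3 / 2) ^ Q) (hκ : Q * Fintype.card κ ≤ Fintype.card ι) :
    ∃ σ : ι → ℤˣ, ∀ E : Finset ι, Q * E.card ≤ Fintype.card ι →
      ¬ IsSignPatternOn p (E : Set ι)ᶜ σ := by
  classical
  by_contra! hcon
  choose E hE hpattern using hcon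
  have hQ₀ : 0 < Q := Nat.pos_of_ne_zero fun h => by
    rw [h, pow_zero] at hQ
    linarith [D.cast_nonneg (α := ℝ)]
  let e := Fintype.card ι / Q
  have le_e_iff (a : ℕ) : a ≤ e ↔ Q * a ≤ Fintype.card ι := by
    rw [Nat.le_div_iff_mul_le hQ₀, mul_comm]
  refine (pow_mul_sum_choose_mul_sum_choose_lt hQ Fintype.card_ne_zero ((le_e_iff _).mpr hκ)
    (Nat.mul_div_le _ _)).not_ge ?_
  calc 2 ^ Fintype.card ι = (Finset.univ : Finset (ι → ℤˣ)).card := by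
        simp [Fintype.card_units_int]
    _ ≤ _ := ?_
  rw [← card_filter_card_le_eq_sum_choose e]
  refine Finset.card_le_mul_card_image_of_maps_to (f := E)
    (fun σ _ => by simpa [le_e_iff] using hE σ) _ fun T hT => ?_
  refine (card_le_of_isSignPatternOn_compl hp T fun σ hσ => ?_).trans ?_
  · exact (Finset.mem_filter.mp hσ).2 ▸ hpattern σ
  · gcongr
    · norm_num
    · simpa using hT

end SignPatterns

section Tensors

/-- The value at `I` of the tensor `∑ s, ⨂ i, v s i`, as a polynomial in the entries `v s i j` of
its factors, which are the variables `X (s, ⟨i, j⟩)`. -/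
noncomputable def tensorPolynomial {δ τ : Type*} [Fintype δ] [Fintype τ] {J : δ → Type*}
    (I : ∀ i, J i) : MvPolynomial (τ × Σ i, J i) ℝ :=
  ∑ s, ∏ i, X (s, ⟨i, I i⟩)

theorem totalDegree_tensorPolynomial_le {δ τ : Type*} [Fintype δ] [Fintype τ] {J : δ → Type*}
    (I : ∀ i, J i) : (tensorPolynomial (τ := τ) I).totalDegree ≤ Fintype.card δ :=
  totalDegree_finsetSum_le fun s _ => (totalDegree_finsetProd _ _).trans (by simp [totalDegree_X])

theorem exists_monotone_iUnion_eq_univ_integrableOn {α τ E : Type*} [MeasurableSpace α]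
    [NormedAddCommGroup E] [Finite τ] (μ : Measure α) [SigmaFinite μ] {u : τ → α → E}
    (hu : ∀ s, AEStronglyMeasurable (u s) μ) :
    ∃ T : ℕ → Set α, Monotone T ∧ (∀ r, MeasurableSet (T r)) ∧ ⋃ r, T r = Set.univ ∧
      ∀ r s, IntegrableOn (u s) (T r) μ := by
  cases nonempty_fintype τ
  let ρ : α → NNReal := fun x => ∑ s, ‖u s x‖₊
  let ν := μ.withDensity fun x => ρ x
  refine ⟨spanningSets ν, monotone_spanningSets ν, measurableSet_spanningSets ν,
    iUnion_spanningSets ν, fun r s =>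
      ⟨(hu s).restrict, hasFiniteIntegral_iff_enorm.mpr ?_⟩⟩
  calc ∫⁻ x in spanningSets ν r, ‖u s x‖ₑ ∂μ
      ≤ ∫⁻ x in spanningSets ν r, ρ x ∂μ := by
        refine lintegral_mono fun x => ENNReal.coe_le_coe.mpr ?_
        exact Finset.single_le_sum_of_canonicallyOrdered (f := fun s => ‖u s x‖₊)
          (Finset.mem_univ s)
    _ = ν (spanningSets ν r) := (withDensity_apply _ (measurableSet_spanningSets ν r)).symm
    _ < ⊤ := measure_spanningSets_lt_top ν r

variable {δ τ : Type*} [Fintype δ] [Fintype τ] {X : δ → Type*} [∀ i, MeasurableSpace (X i)]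
  {μ : ∀ i, Measure (X i)} [∀ i, SigmaFinite (μ i)]

theorem setIntegral_pi_sum_prod {B : ∀ i, Set (X i)} {u : τ → ∀ i, X i → ℝ}
    (hu : ∀ s i, IntegrableOn (u s i) (B i) (μ i)) :
    ∫ x in Set.univ.pi B, ∑ s, ∏ i, u s i (x i) ∂Measure.pi μ =
      ∑ s, ∏ i, ∫ x in B i, u s i x ∂μ i := by
  rw [Measure.restrict_pi_pi, integral_finsetSum _ fun s _ => Integrable.fintype_prod_dep (hu s)]
  exact Finset.sum_congr rfl fun s _ => integral_fintype_prod_eq_prod _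

theorem exists_tendsto_eval_tensorPolynomial {J : δ → Type*} {A : ∀ i, J i → Set (X i)}
    (hA : ∀ i j, MeasurableSet (A i j)) {u : τ → ∀ i, X i → ℝ} (hu : ∀ s i, Measurable (u s i))
    (hint : Integrable (fun x : ∀ i, X i => ∑ s, ∏ i, u s i (x i)) (Measure.pi μ)) :
    ∃ v : ℕ → (τ × Σ i, J i) → ℝ, ∀ I,
      Tendsto (fun r => eval (v r) (tensorPolynomial I)) atTop
        (𝓝 (∫ x in Set.univ.pi fun i => A i (I i), ∑ s, ∏ i, u s i (x i) ∂Measure.pi μ)) := by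
  choose T hT_mono hT_meas hT_union hT_int using fun i =>
    exists_monotone_iUnion_eq_univ_integrableOn (μ i) fun s => (hu s i).aestronglyMeasurable
  refine ⟨fun r a => ∫ x in A a.2.1 a.2.2 ∩ T a.2.1 r, u a.1 a.2.1 x ∂μ a.2.1, fun I => ?_⟩
  have hmono : Monotone fun r => Set.univ.pi fun i => A i (I i) ∩ T i r := fun r r' h =>
    Set.pi_mono fun i _ => Set.inter_subset_inter_right _ (hT_mono i h)
  have hunion : ⋃ r, (Set.univ.pi fun i => A i (I i) ∩ T i r) = Set.univ.pi fun i => A i (I i) := by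
    rw [Set.iUnion_univ_pi_of_monotone (s := fun i r => A i (I i) ∩ T i r)
      fun i r r' h => Set.inter_subset_inter_right _ (hT_mono i h)]
    simp only [← Set.inter_iUnion, hT_union, Set.inter_univ]
  have hlim := tendsto_setIntegral_of_monotone
    (fun r => MeasurableSet.univ_pi fun i => (hA i (I i)).inter (hT_meas i r)) hmono
    hint.integrableOn
  rw [hunion] at hlim
  refine hlim.congr fun r => ?_
  rw [setIntegral_pi_sum_prod fun s i => (hT_int i r s).mono_set Set.inter_subset_right]
  simp [tensorPolynomial]

theorem isSignPatternOn_tensorPolynomial_of_setIntegral_pos {J : δ → Type*} [∀ i, Finite (J i)]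
    {A : ∀ i, J i → Set (X i)} (hA : ∀ i j, MeasurableSet (A i j)) {u : τ → ∀ i, X i → ℝ}
    (hu : ∀ s i, Measurable (u s i))
    (hint : Integrable (fun x : ∀ i, X i => ∑ s, ∏ i, u s i (x i)) (Measure.pi μ))
    {s : Set (∀ i, J i)} {σ : (∀ i, J i) → ℤˣ} (hσ : ∀ I ∈ s, 0 < ((σ I : ℤ) : ℝ) *
      ∫ x in Set.univ.pi fun i => A i (I i), ∑ s, ∏ i, u s i (x i) ∂Measure.pi μ) :
    IsSignPatternOn (tensorPolynomial (τ := τ)) s σ := by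
  obtain ⟨v, hv⟩ := exists_tendsto_eval_tensorPolynomial hA hu hint
  have hpos : ∀ᶠ r in atTop, ∀ I ∈ s, 0 < ((σ I : ℤ) : ℝ) * eval (v r) (tensorPolynomial I) :=
    (Set.toFinite s).eventually_all.mpr fun I hI =>
      ((hv I).const_mul _).eventually_const_lt (hσ I hI)
  obtain ⟨r, hr⟩ := hpos.exists
  exact ⟨v r, hr⟩

end Tensors

section LowerBound

theorem card_mul_le_lintegral_abs_sub {Ω ι : Type*} [MeasurableSpace Ω] {μ : Measure Ω}
    {A : ι → Set Ω} {E : Finset ι} (hA : ∀ i ∈ E, MeasurableSet (A i))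
    (hA_disj : (E : Set ι).PairwiseDisjoint A) {f g : Ω → ℝ} (hf : Integrable f μ)
    (hg : Integrable g μ) {σ : ι → ℤˣ} {γ : ℝ}
    (hfγ : ∀ i ∈ E, γ ≤ ((σ i : ℤ) : ℝ) * ∫ x in A i, f x ∂μ)
    (hg_nonpos : ∀ i ∈ E, ((σ i : ℤ) : ℝ) * ∫ x in A i, g x ∂μ ≤ 0) :
    E.card * ENNReal.ofReal γ ≤ ∫⁻ x, ENNReal.ofReal |f x - g x| ∂μ := by
  have hfg : Integrable (fun x => f x - g x) μ := hf.sub hg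
  have hle : ∀ i ∈ E, ENNReal.ofReal γ ≤ ∫⁻ x in A i, ENNReal.ofReal |f x - g x| ∂μ := by
    intro i hi
    rw [← ofReal_integral_eq_lintegral_ofReal hfg.abs.integrableOn
      (ae_of_all _ fun x => abs_nonneg _)]
    refine ENNReal.ofReal_le_ofReal ?_
    calc γ ≤ ((σ i : ℤ) : ℝ) * ∫ x in A i, (f x - g x) ∂μ := by
          rw [integral_sub hf.integrableOn hg.integrableOn, mul_sub]
          linarith [hfγ i hi, hg_nonpos i hi]
      _ ≤ |((σ i : ℤ) : ℝ) * ∫ x in A i, (f x - g x) ∂μ| := le_abs_self _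
      _ = |∫ x in A i, (f x - g x) ∂μ| := by
          rcases Int.units_eq_one_or (σ i) with h | h <;> simp [h]
      _ ≤ ∫ x in A i, |f x - g x| ∂μ := abs_integral_le_integral_abs
  calc E.card * ENNReal.ofReal γ = ∑ _i ∈ E, ENNReal.ofReal γ := by
        rw [Finset.sum_const, nsmul_eq_mul]
    _ ≤ ∑ i ∈ E, ∫⁻ x in A i, ENNReal.ofReal |f x - g x| ∂μ := Finset.sum_le_sum hle
    _ = ∫⁻ x in ⋃ i ∈ E, A i, ENNReal.ofReal |f x - g x| ∂μ :=
        (lintegral_biUnion_finset hA_disj hA _).symm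
    _ ≤ ∫⁻ x, ENNReal.ofReal |f x - g x| ∂μ := setLIntegral_le_lintegral _ _

theorem mul_mul_sum_le_of_le_mul_div_sup {δ : Type*} [Fintype δ] {n : δ → ℕ} {m N Q : ℕ} {c : ℝ}
    (hc : Q * Fintype.card δ * c ≤ 1) (hm : (m : ℝ) ≤ c * N / (Finset.univ.sup n : ℕ)) :
    Q * (m * ∑ i, n i) ≤ N := by
  have hsum : ∑ i, n i ≤ Fintype.card δ * Finset.univ.sup n := by
    simpa using Finset.sum_le_card_nsmul Finset.univ n _ fun i hi => Finset.le_sup hi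
  rcases (Finset.univ.sup n).eq_zero_or_pos with hsup | hsup
  · simp [Nat.le_zero.mp (hsum.trans_eq (by rw [hsup, mul_zero]))]
  rw [le_div_iff₀ (by exact_mod_cast hsup)] at hm
  rw [← Nat.cast_le (α := ℝ)]
  calc ((Q * (m * ∑ i, n i) : ℕ) : ℝ)
      ≤ (Q * (m * (Fintype.card δ * Finset.univ.sup n)) : ℕ) := by gcongr
    _ = Q * Fintype.card δ * (m * (Finset.univ.sup n : ℕ)) := by push_cast; ring
    _ ≤ Q * Fintype.card δ * (c * N) := by gcongr
    _ = Q * Fintype.card δ * c * N := by ring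
    _ ≤ N := mul_le_of_le_one_left N.cast_nonneg hc

theorem ofReal_mul_mul_natCast_le {c γ : ℝ} {N Q : ℕ} {L : ENNReal} (hc : 0 ≤ c)
    (hcQ : c * Q ≤ 1) (hL : N * ENNReal.ofReal γ ≤ Q * L) : ENNReal.ofReal (c * γ * N) ≤ L :=
  calc ENNReal.ofReal (c * γ * N) = ENNReal.ofReal c * (N * ENNReal.ofReal γ) := by
        rw [mul_assoc, ENNReal.ofReal_mul hc, mul_comm γ, ENNReal.ofReal_mul N.cast_nonneg,
          ENNReal.ofReal_natCast]
    _ ≤ ENNReal.ofReal c * (Q * L) := by gcongr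
    _ = ENNReal.ofReal (c * Q) * L := by
        rw [ENNReal.ofReal_mul hc, ENNReal.ofReal_natCast, mul_assoc]
    _ ≤ L := mul_le_of_le_one_left' (ENNReal.ofReal_le_one.mpr hcQ)

theorem exists_signs_forall_card_mul_le_lintegral_abs_sub {δ τ : Type*} [Fintype δ] [Fintype τ]
    {X : δ → Type*} [∀ i, MeasurableSpace (X i)] {μ : ∀ i, Measure (X i)}
    [∀ i, SigmaFinite (μ i)] {J : δ → Type*} [∀ i, Fintype (J i)] {A : ∀ i, J i → Set (X i)}
    (hA : ∀ i j, MeasurableSet (A i j))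
    (hA_disj : Pairwise fun I I' : ∀ i, J i =>
      Disjoint (Set.univ.pi fun i => A i (I i)) (Set.univ.pi fun i => A i (I' i)))
    {Q : ℕ} (hQ : (128 * (4 * Fintype.card δ + 1) : ℝ) ≤ (3 / 2) ^ Q)
    (hτ : Q * (Fintype.card τ * ∑ i, Fintype.card (J i)) ≤ ∏ i, Fintype.card (J i)) :
    ∃ σ : (∀ i, J i) → ℤˣ, ∀ {f : (∀ i, X i) → ℝ} {γ : ℝ}, Integrable f (Measure.pi μ) →
      (∀ I, γ ≤ ((σ I : ℤ) : ℝ) * ∫ x in Set.univ.pi fun i => A i (I i), f x ∂Measure.pi μ) →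
      ∀ {u : τ → ∀ i, X i → ℝ}, (∀ s i, Measurable (u s i)) →
      Integrable (fun x : ∀ i, X i => ∑ s, ∏ i, u s i (x i)) (Measure.pi μ) →
      (∏ i, Fintype.card (J i) : ℕ) * ENNReal.ofReal γ ≤
        Q * ∫⁻ x, ENNReal.ofReal |f x - ∑ s, ∏ i, u s i (x i)| ∂Measure.pi μ := by
  classical
  rw [← Fintype.card_pi] at hτ ⊢
  rcases isEmpty_or_nonempty (∀ i, J i) with _ | _
  · exact ⟨1, by simp⟩
  obtain ⟨σ, hσ⟩ := exists_forall_not_isSignPatternOn_compl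
    (totalDegree_tensorPolynomial_le (τ := τ) (J := J)) hQ (by simpa using hτ)
  refine ⟨σ, fun {f γ} hf hfγ u hu hg => ?_⟩
  let E := Finset.univ.filter fun I : ∀ i, J i => ((σ I : ℤ) : ℝ) *
    ∫ x in Set.univ.pi fun i => A i (I i), ∑ s, ∏ i, u s i (x i) ∂Measure.pi μ ≤ 0
  have hE : Fintype.card (∀ i, J i) ≤ Q * E.card := le_of_not_ge fun hle => hσ E hle
    (isSignPatternOn_tensorPolynomial_of_setIntegral_pos hA hu hg fun I hI => by
      simpa [E] using hI)
  calc (Fintype.card (∀ i, J i) : ENNReal) * ENNReal.ofReal γ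
      ≤ Q * (E.card * ENNReal.ofReal γ) := by
        rw [← mul_assoc]
        gcongr
        exact_mod_cast hE
    _ ≤ _ := by
        gcongr
        exact card_mul_le_lintegral_abs_sub (fun I _ => MeasurableSet.univ_pi fun i => hA i (I i))
          (hA_disj.set_pairwise _) hf hg (fun I _ => hfγ I) fun I hI => (Finset.mem_filter.mp hI).2

end LowerBound

end TensorApproximation

open TensorApproximation in
/-- If a class `F ⊆ L₁(X, μ)` on a product measure space `γ`-shatters an
`(n₁×⋯×n_d)`-product family of pairwise disjoint measurable sets, then the error of
best `m`-term approximation by tensor products satisfies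
`Θ_m(F, L₁) ≥ c(d) γ N` for all `m ≤ c(d) N / max_j n_j`, where `N = n₁⋯n_d`. -/
theorem theta_lower_of_shattering (d : ℕ) :
    ∃ c : ℝ, 0 < c ∧
      ∀ (X : Fin d → Type*) [∀ i, MeasurableSpace (X i)]
        (μ : (i : Fin d) → Measure (X i)) [∀ i, SigmaFinite (μ i)]
        (n : Fin d → ℕ) (A : (i : Fin d) → Fin (n i) → Set (X i)),
        (∀ i j, MeasurableSet (A i j)) →
        (∀ I J : (i : Fin d) → Fin (n i), I ≠ J →
          Disjoint (Set.univ.pi fun i => A i (I i)) (Set.univ.pi fun i => A i (J i))) →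
        ∀ F : Set (((i : Fin d) → X i) → ℝ),
        (∀ f ∈ F, Integrable f (Measure.pi μ)) →
        ∀ γ : ℝ, 0 < γ →
        (∀ σ : ((i : Fin d) → Fin (n i)) → ℝ, (∀ I, σ I = 1 ∨ σ I = -1) →
          ∃ f ∈ F, ∀ I, γ ≤ σ I * ∫ x in Set.univ.pi fun i => A i (I i), f x ∂Measure.pi μ) →
        ∀ m : ℕ, (m : ℝ) ≤ c * (∏ i, n i : ℕ) / (Finset.univ.sup n : ℕ) →
          ENNReal.ofReal (c * γ * (∏ i, n i : ℕ)) ≤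
            ⨆ f ∈ F, ⨅ (u : Fin m → (i : Fin d) → X i → ℝ)
              (_ : (∀ s i, Measurable (u s i)) ∧
                Integrable (fun x : (i : Fin d) → X i => ∑ s, ∏ i, u s i (x i))
                  (Measure.pi μ)),
              ∫⁻ x, ENNReal.ofReal |f x - ∑ s, ∏ i, u s i (x i)| ∂Measure.pi μ := by
  obtain ⟨Q, hQ⟩ := pow_unbounded_of_one_lt (128 * (4 * d + 1) : ℝ) (y := 3 / 2) (by norm_num)
  have hQ₀ : 0 < (Q : ℝ) := Nat.cast_pos.mpr <| Nat.pos_of_ne_zero fun h => by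
    rw [h, pow_zero] at hQ
    linarith [d.cast_nonneg (α := ℝ)]
  let c : ℝ := 1 / (Q * (d + 1))
  have hc : 0 < c := by positivity
  have hcQ : c * Q ≤ 1 := by
    rw [div_mul_eq_mul_div, one_mul, div_le_one (by positivity)]
    exact le_mul_of_one_le_right hQ₀.le (le_add_of_nonneg_left d.cast_nonneg)
  have hcd : Q * d * c ≤ 1 := by
    rw [mul_one_div, div_le_one (by positivity)]
    gcongr
    exact le_add_of_nonneg_right zero_le_one
  refine ⟨c, hc, fun X _ μ _ n A hA hA_disj F hF γ _ hF_shatters m hm => ?_⟩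
  have hparams : Q * (m * ∑ i, n i) ≤ ∏ i, n i :=
    mul_mul_sum_le_of_le_mul_div_sup (by rwa [Fintype.card_fin]) hm
  obtain ⟨σ, hσ⟩ := exists_signs_forall_card_mul_le_lintegral_abs_sub (τ := Fin m) (μ := μ) hA
    hA_disj (by simpa using hQ.le) (by simpa using hparams)
  obtain ⟨f, hfF, hf⟩ := hF_shatters (fun I => (σ I : ℤ)) fun I => by
    rcases Int.units_eq_one_or (σ I) with h | h <;> simp [h]
  refine le_iSup₂_of_le f hfF (le_iInf₂ fun u hu => ofReal_mul_mul_natCast_le hc.le hcQ ?_)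
  simpa only [Fintype.card_fin] using hσ (hF f hfF) hf hu.1 hu.2
end
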